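/- (Ingham's Tauberian theorem.) Let D be a connected open subset of \mathbb{C} containing the interval (0,h] for some h > 0, and for t \in (0,h] let \delta(t) be the distance from t to the complement of D. Suppose \varphi, \chi : D \to \mathbb{C} satisfy: (a) \varphi and \chi are holomorphic on D and positive on (0,h]; (b) -t\varphi'(t) \to \infty as t \to 0^+; (c) -\delta(t)\varphi'(t)/(t\sqrt{\varphi''(t)}) \to \infty as t \to 0^+; (d) \varphi''(t+z) = O(\varphi''(t)) and \chi(t+z) = O(\chi(t)) uniformly over |z| < \delta(t) as t \to 0^+. Let A : [0,\infty) \to \mathbb{R} be weakly increasing with A(0) = 0, set f(z) = \int_0^{\infty} e^{-zu}\,dA(u) (a Lebesgue–Stieltjes integral), and assume f(z) exists for all Re(z) > 0. Suppose further: (i) f(z) \sim \chi(z) e^{\varphi(z)} as z \to 0 with z \in D; (ii) for each fixed \Delta > 0, f(z) = O(\chi(|z|) e^{\varphi(|z|)}) as z \to 0 in the region |Im(z)| \le \Delta\,Re(z). Then A(x) \sim \frac{\chi(\psi(x)) e^{\varphi(\psi(x)) + x\psi(x)}}{\psi(x) \sqrt{2\pi \varphi''(\psi(x))}} as x \to \infty,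 where \psi denotes the inverse function of -\varphi'. -/

import Mathlib

open Filter Topology MeasureTheory Set

noncomputable section

/-!
Put `t = ψ(x)`, so that `u ↦ φ(u) + x u` has its saddle point at `t`, and tilt the measure `dA` by
`e^{-tu}`: after translation by `x` and a normalisation `A(x)` is the integral of `e^v` over
`v ≤ 0`, in the scale `v = t (u - x)`, against a measure which should be close to Lebesgue measure.
The transform of the tilted measure along the vertical line through `t` is `f(t + iy)`. Rescaled by
`√φ''(t)` it tends to a Gaussian: near the axis by (i) and Taylor expansion, while far from it (ii)
and the growth of `φ` provide an integrable majorant. Testing against a strictly positive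
band-limited kernel and using Lévy's continuity theorem turns this into local convergence of the
tilted measures to Lebesgue measure.

The Gaussian scale must be short compared with `δ`, that is `√φ''(t) δ(t) → ∞`. This quantity is
continuous in `t`, and comparing the bounds on `|f(t + iy)|` from (i) and (ii) at `|y| ≍ δ(t)`
forces a gap in its values.
-/

section Fejer

open scoped FourierTransform

/-- The triangular function supported on `[-1, 1]`. -/
def tent (ξ : ℝ) : ℝ := max 0 (1 - |ξ|)

lemma tent_nonneg (ξ : ℝ) : 0 ≤ tent ξ := le_max_left _ _

lemma tent_eq_zero {ξ : ℝ} (h : 1 ≤ |ξ|) : tent ξ = 0 := max_eq_left (by linarith)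

lemma continuous_tent : Continuous tent := by unfold tent; fun_prop

lemma hasCompactSupport_tent : HasCompactSupport tent :=
  HasCompactSupport.intro (isCompact_Icc (a := (-1 : ℝ)) (b := 1)) fun _ hξ =>
    tent_eq_zero (not_lt.1 fun h => hξ ⟨(abs_lt.1 h).1.le, (abs_lt.1 h).2.le⟩)

lemma integrable_tent : Integrable tent :=
  continuous_tent.integrable_of_hasCompactSupport hasCompactSupport_tent

lemma integrable_tent_mul {g : ℝ → ℂ} (hg : Continuous g) :
    Integrable fun ξ => (tent ξ : ℂ) * g ξ :=
  ((Complex.continuous_ofReal.comp continuous_tent).mul hg).integrable_of_hasCompactSupport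
    (hasCompactSupport_tent.comp_left Complex.ofReal_zero).mul_right

/-- The Fourier transform of `tent`, as a real cosine integral. -/
def tentFourier (v : ℝ) : ℝ := ∫ ξ, tent ξ * Real.cos (2 * Real.pi * v * ξ)

lemma integrable_tent_mul_cos (w : ℝ) : Integrable fun ξ => tent ξ * Real.cos (w * ξ) :=
  (continuous_tent.mul (by fun_prop)).integrable_of_hasCompactSupport
    hasCompactSupport_tent.mul_right

lemma integral_one_sub_mul_cos {w : ℝ} (hw : w ≠ 0) :
    ∫ ξ in (0 : ℝ)..1, (1 - ξ) * Real.cos (w * ξ) = (1 - Real.cos w) / w ^ 2 := by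
  have hderiv (ξ : ℝ) : HasDerivAt
      (fun ξ => (1 - ξ) * Real.sin (w * ξ) / w - Real.cos (w * ξ) / w ^ 2)
      ((1 - ξ) * Real.cos (w * ξ)) ξ := by
    have h0 : HasDerivAt (fun ξ : ℝ => w * ξ) w ξ := by
      simpa using (hasDerivAt_id ξ).const_mul w
    refine (((((hasDerivAt_id ξ).const_sub 1).mul h0.sin).div_const w).sub
      (h0.cos.div_const (w ^ 2))).congr_deriv ?_
    simp only [id]
    field_simp
    ring
  rw [intervalIntegral.integral_eq_sub_of_hasDerivAt (fun ξ _ => hderiv ξ)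
    (by apply Continuous.intervalIntegrable; fun_prop)]
  simp only [sub_self, zero_mul, zero_div, mul_one, mul_zero, Real.sin_zero, Real.cos_zero]
  ring

lemma tentFourier_mul_sq (v : ℝ) :
    tentFourier v * (2 * Real.pi * v) ^ 2 = 2 * (1 - Real.cos (2 * Real.pi * v)) := by
  rw [tentFourier]
  generalize 2 * Real.pi * v = w
  rcases eq_or_ne w 0 with rfl | hw
  · simp
  have habs (ξ : ℝ) : tent ξ * Real.cos (w * ξ) = tent |ξ| * Real.cos (w * |ξ|) := by
    rw [tent, tent, abs_abs, ← Real.cos_abs (w * ξ), ← Real.cos_abs (w * |ξ|), abs_mul, abs_mul,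
      abs_abs]
  have hhalf : ∫ ξ, tent ξ * Real.cos (w * ξ) =
      2 * ∫ ξ in (0 : ℝ)..1, (1 - ξ) * Real.cos (w * ξ) := by
    rw [funext habs, integral_comp_abs (f := fun ξ => tent ξ * Real.cos (w * ξ)),
      intervalIntegral.integral_of_le zero_le_one,
      setIntegral_eq_of_subset_of_forall_sdiff_eq_zero measurableSet_Ioi Ioc_subset_Ioi_self]
    · congr 1
      refine setIntegral_congr_fun measurableSet_Ioc fun ξ hξ => ?_
      simp only [tent, abs_of_pos hξ.1, max_eq_right (sub_nonneg.2 hξ.2)]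
    · intro ξ hξ
      have h1 : 1 < ξ := not_le.1 fun h => hξ.2 ⟨hξ.1, h⟩
      rw [tent_eq_zero (h1.le.trans (le_abs_self ξ)), zero_mul]
  rw [hhalf, integral_one_sub_mul_cos hw]
  field_simp

lemma tentFourier_nonneg (v : ℝ) : 0 ≤ tentFourier v := by
  rcases eq_or_ne v 0 with rfl | hv
  · exact integral_nonneg fun ξ => by simpa using tent_nonneg ξ
  · have hsq : 0 < (2 * Real.pi * v) ^ 2 := by positivity
    refine nonneg_of_mul_nonneg_left (b := (2 * Real.pi * v) ^ 2) ?_ hsq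
    rw [tentFourier_mul_sq]
    linarith [Real.cos_le_one (2 * Real.pi * v)]

lemma tentFourier_le_integral (v : ℝ) : tentFourier v ≤ ∫ ξ, tent ξ :=
  integral_mono (integrable_tent_mul_cos _) integrable_tent fun ξ =>
    mul_le_of_le_one_right (tent_nonneg ξ) (Real.cos_le_one _)

lemma fourier_tent (v : ℝ) : 𝓕 (fun ξ => (tent ξ : ℂ)) v = tentFourier v := by
  set w := 2 * Real.pi * v
  have hint (w : ℝ) : Integrable fun ξ : ℝ => tent ξ * Complex.exp ((w * ξ : ℝ) * Complex.I) :=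
    integrable_tent_mul (by fun_prop)
  have hfourier : 𝓕 (fun ξ => (tent ξ : ℂ)) v =
      ∫ ξ : ℝ, tent ξ * Complex.exp ((-w * ξ : ℝ) * Complex.I) := by
    rw [Real.fourier_real_eq_integral_exp_smul]
    refine integral_congr_ae (Eventually.of_forall fun ξ => ?_)
    simp only [smul_eq_mul, mul_comm (tent ξ : ℂ), w]
    congr 4
    ring
  have hsymm : 𝓕 (fun ξ => (tent ξ : ℂ)) v =
      ∫ ξ : ℝ, tent ξ * Complex.exp ((w * ξ : ℝ) * Complex.I) := by
    rw [hfourier, ← integral_neg_eq_self]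
    simp only [tent, abs_neg, neg_mul_neg]
  have hcos (ξ : ℝ) : tent ξ * Complex.exp ((w * ξ : ℝ) * Complex.I) +
      tent ξ * Complex.exp ((-w * ξ : ℝ) * Complex.I) =
      2 * ((tent ξ * Real.cos (w * ξ) : ℝ) : ℂ) := by
    push_cast
    rw [mul_left_comm, Complex.two_cos]
    ring_nf
  refine mul_left_cancel₀ (two_ne_zero (α := ℂ)) ?_
  calc 2 * 𝓕 (fun ξ => (tent ξ : ℂ)) v
    _ = ∫ ξ : ℝ, 2 * ((tent ξ * Real.cos (w * ξ) : ℝ) : ℂ) := by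
      simp_rw [← hcos]
      rw [integral_add (hint w) (hint (-w)), ← hsymm, ← hfourier, two_mul]
    _ = 2 * tentFourier v := by rw [integral_const_mul, integral_complex_ofReal, tentFourier]

/-- A compactly supported function whose Fourier transform `fejerKernel` is strictly positive: the
transform of `tent` has real zeros, and the modulation adds a copy translated by `1 / 2`, which
has no zero in common with it. -/
def fejer (ξ : ℝ) : ℂ := tent ξ * (1 + Complex.exp (Real.pi * ξ * Complex.I))

/-- The Fourier transform of `fejer`, as a real-valued function. -/
def fejerKernel (v : ℝ) : ℝ := tentFourier v + tentFourier (v - 1 / 2)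

lemma continuous_fejer : Continuous fejer :=
  (Complex.continuous_ofReal.comp continuous_tent).mul (by fun_prop)

lemma hasCompactSupport_fejer : HasCompactSupport fejer :=
  (hasCompactSupport_tent.comp_left Complex.ofReal_zero).mul_right

lemma integrable_fejer : Integrable fejer :=
  continuous_fejer.integrable_of_hasCompactSupport hasCompactSupport_fejer

lemma fourier_fejer (v : ℝ) : 𝓕 fejer v = fejerKernel v := by
  rw [fejerKernel, Complex.ofReal_add, ← fourier_tent, ← fourier_tent,
    Real.fourier_real_eq_integral_exp_smul, Real.fourier_real_eq_integral_exp_smul,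
    Real.fourier_real_eq_integral_exp_smul, ← integral_add]
  · refine integral_congr_ae (Eventually.of_forall fun ξ => ?_)
    simp only [fejer, smul_eq_mul]
    rw [mul_left_comm, mul_add, mul_one, ← Complex.exp_add, mul_add, mul_comm (tent ξ : ℂ),
      mul_comm (tent ξ : ℂ)]
    push_cast
    congr 3
    ring
  all_goals
    simp only [smul_eq_mul, mul_comm _ (tent _ : ℂ)]
    exact integrable_tent_mul (by fun_prop)

lemma continuous_tentFourier : Continuous tentFourier := by
  have h : Continuous (𝓕 fun ξ => (tent ξ : ℂ)) := VectorFourier.fourierIntegral_continuous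
    Real.continuous_fourierChar (by exact continuous_inner) integrable_tent.ofReal
  simpa only [Function.comp_def, fourier_tent, Complex.ofReal_re] using
    Complex.continuous_re.comp h

lemma continuous_fejerKernel : Continuous fejerKernel :=
  continuous_tentFourier.add (continuous_tentFourier.comp (by fun_prop))

lemma one_le_mul_fejerKernel (v : ℝ) : 1 ≤ 2 * Real.pi ^ 2 * (1 + v ^ 2) * fejerKernel v := by
  have h1 := tentFourier_mul_sq v
  have h2 := tentFourier_mul_sq (v - 1 / 2)
  rw [show 2 * Real.pi * (v - 1 / 2) = 2 * Real.pi * v - Real.pi by ring, Real.cos_sub_pi] at h2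
  have h3 := mul_nonneg (tentFourier_nonneg v)
    (by positivity : 0 ≤ Real.pi ^ 2 * (2 + v ^ 2))
  have h4 := mul_nonneg (tentFourier_nonneg (v - 1 / 2))
    (by positivity : 0 ≤ Real.pi ^ 2 * ((v + 1 / 2) ^ 2 + 3 / 2))
  rw [fejerKernel]
  linear_combination h3 + h4 - (h1 + h2) / 4

lemma fejerKernel_pos (v : ℝ) : 0 < fejerKernel v :=
  pos_of_mul_pos_right (zero_lt_one.trans_le (one_le_mul_fejerKernel v)) (by positivity)

lemma integrable_tentFourier : Integrable tentFourier := by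
  refine (integrable_inv_one_add_sq.const_mul ((∫ ξ, tent ξ) + 1)).mono'
    continuous_tentFourier.aestronglyMeasurable (Eventually.of_forall fun v => ?_)
  rw [Real.norm_of_nonneg (tentFourier_nonneg v), ← div_eq_mul_inv, le_div_iff₀ (by positivity)]
  have hpi : 4 ≤ Real.pi ^ 2 := by nlinarith [Real.two_le_pi]
  have hsq : tentFourier v * v ^ 2 * 4 ≤ tentFourier v * v ^ 2 * Real.pi ^ 2 :=
    mul_le_mul_of_nonneg_left hpi (mul_nonneg (tentFourier_nonneg v) (sq_nonneg v))
  nlinarith [tentFourier_mul_sq v, tentFourier_le_integral v,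
    Real.neg_one_le_cos (2 * Real.pi * v)]

lemma integrable_fejerKernel : Integrable fejerKernel :=
  integrable_tentFourier.add (integrable_tentFourier.comp_sub_right _)

lemma fejerKernel_le (v : ℝ) : fejerKernel v ≤ 2 * ∫ ξ, tent ξ := by
  rw [two_mul]
  exact add_le_add (tentFourier_le_integral _) (tentFourier_le_integral _)

lemma integral_fejerKernel_mul_exp (η : ℝ) :
    ∫ v : ℝ, (fejerKernel v : ℂ) * Complex.exp (η * v * Complex.I) = fejer (η / (2 * Real.pi)) := by
  have hfourier : 𝓕 fejer = fun v => (fejerKernel v : ℂ) := funext fourier_fejer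
  rw [← congrFun (continuous_fejer.fourierInv_fourier_eq integrable_fejer
    (hfourier ▸ integrable_fejerKernel.ofReal)) (η / (2 * Real.pi)), Real.fourierInv_eq']
  refine integral_congr_ae (Eventually.of_forall fun v => ?_)
  simp only [hfourier, smul_eq_mul, mul_comm (fejerKernel v : ℂ)]
  congr 2
  simp
  field_simp

lemma exists_exp_le_mul_fejerKernel (b : ℝ) : ∃ M : ℝ, ∀ v ≤ b, Real.exp v ≤ M * fejerKernel v := by
  refine ⟨2 * Real.pi ^ 2 * (2 * Real.exp (2 * |b|)), fun v hv => ?_⟩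
  have hpoly : Real.exp v * (1 + v ^ 2) ≤ 2 * Real.exp (2 * |b|) := by
    have hquad : 1 + v ^ 2 ≤ 2 * Real.exp |v| := by
      nlinarith [Real.quadratic_le_exp_of_nonneg (abs_nonneg v), sq_abs v, abs_nonneg v]
    have hexp : Real.exp v * Real.exp |v| ≤ Real.exp (2 * |b|) := by
      rw [← Real.exp_add, Real.exp_le_exp]
      rcases abs_cases v with ⟨h, -⟩ | ⟨h, -⟩ <;> linarith [le_abs_self b, abs_nonneg b]
    nlinarith [Real.exp_pos v]
  calc Real.exp v ≤ Real.exp v * (2 * Real.pi ^ 2 * (1 + v ^ 2) * fejerKernel v) :=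
        le_mul_of_one_le_right (Real.exp_pos v).le (one_le_mul_fejerKernel v)
    _ = 2 * Real.pi ^ 2 * (Real.exp v * (1 + v ^ 2)) * fejerKernel v := by ring
    _ ≤ 2 * Real.pi ^ 2 * (2 * Real.exp (2 * |b|)) * fejerKernel v := by
        have := fejerKernel_pos v
        gcongr

end Fejer

section LocalLimit

open scoped FourierTransform

lemma finiteMeasure_tendsto_of_tendsto_charFun {μs : ℕ → FiniteMeasure ℝ} {μ : FiniteMeasure ℝ}
    (hμ : μ ≠ 0)
    (h : ∀ t : ℝ, Tendsto (fun n => charFun (μs n : Measure ℝ) t) atTop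
      (𝓝 (charFun (μ : Measure ℝ) t))) :
    Tendsto μs atTop (𝓝 μ) := by
  have hmass : Tendsto (fun n => (μs n).mass) atTop (𝓝 μ.mass) := by
    have h0 := (Complex.continuous_re.tendsto _).comp (h 0)
    simp only [charFun_zero] at h0
    exact NNReal.tendsto_coe.1 h0
  have hmass_ne : μ.mass ≠ 0 := μ.mass_nonzero_iff.2 hμ
  have hnormalize {ν : FiniteMeasure ℝ} (hν : ν ≠ 0) (t : ℝ) :
      charFun (ν.normalize : Measure ℝ) t = ((ν.mass : ℝ) : ℂ)⁻¹ * charFun (ν : Measure ℝ) t := by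
    rw [ν.toMeasure_normalize_eq_of_nonzero hν, charFun_apply_real, charFun_apply_real,
      integral_smul_nnreal_measure, NNReal.smul_def, Complex.real_smul, NNReal.coe_inv,
      Complex.ofReal_inv]
  rw [← FiniteMeasure.tendsto_normalize_iff_tendsto hμ]
  refine ⟨ProbabilityMeasure.tendsto_of_tendsto_charFun fun t => ?_, hmass⟩
  rw [hnormalize hμ]
  have hmassC : Tendsto (fun n => ((μs n).mass : ℂ)) atTop (𝓝 (μ.mass : ℂ)) :=
    (Complex.continuous_ofReal.tendsto _).comp (NNReal.tendsto_coe.2 hmass)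
  refine ((hmassC.inv₀ (by simpa using hmass_ne)).mul (h t)).congr' ?_
  filter_upwards [hmass.eventually_ne hmass_ne] with n hn
  exact (hnormalize ((μs n).mass_nonzero_iff.1 hn) t).symm

lemma integral_fourier_mul_exp (ν : Measure ℝ) [IsFiniteMeasure ν] {k : ℝ → ℂ}
    (hk : Integrable k) (η : ℝ) :
    ∫ v : ℝ, 𝓕 k v * Complex.exp (η * v * Complex.I) ∂ν =
      ∫ ξ, k ξ * charFun ν (η - 2 * Real.pi * ξ) := by
  have hexp : Integrable (fun v : ℝ => Complex.exp (η * v * Complex.I)) ν :=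
    (integrable_const (1 : ℝ)).mono' (by fun_prop) (Eventually.of_forall fun v => by
      rw [← Complex.ofReal_mul, Complex.norm_exp_ofReal_mul_I])
  refine (VectorFourier.integral_fourierIntegral_smul_eq_flip (L := innerₗ ℝ)
    Real.continuous_fourierChar continuous_inner hk hexp).trans ?_
  refine integral_congr_ae (Eventually.of_forall fun ξ => ?_)
  simp only [smul_eq_mul, VectorFourier.fourierIntegral, charFun_apply_real]
  congr 2 with v
  rw [Circle.smul_def, Real.fourierChar_apply, smul_eq_mul, ← Complex.exp_add]
  congr 1
  simp
  ring

lemma integral_eq_smul_integral_comp_sub_div (F : ℝ → ℂ) (η : ℝ) {T : ℝ} (hT : 0 < T) :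
    ∫ ξ, F ξ = (2 * Real.pi * T)⁻¹ • ∫ s, F ((η - s / T) / (2 * Real.pi)) := by
  have hscale := Measure.integral_comp_div (fun ξ => F (η / (2 * Real.pi) - ξ)) (2 * Real.pi * T)
  rw [integral_sub_left_eq_self, abs_of_pos (by positivity)] at hscale
  have harg (s : ℝ) : (η - s / T) / (2 * Real.pi) = η / (2 * Real.pi) - s / (2 * Real.pi * T) := by
    field_simp
  simp_rw [harg]
  rw [hscale, smul_smul, inv_mul_cancel₀ (by positivity), one_smul]

/-- The characteristic functions of the measures `ν n`, rescaled by `T n`, converge to the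
characteristic function `√(2π) e^{-s²/2}`, dominatedly on every range `|s| ≤ K * T n`. This is what
the tilted measures in the saddle point method satisfy. -/
structure HasGaussianCharFunLimit (ν : ℕ → Measure ℝ) (T : ℕ → ℝ) : Prop where
  tendsto_atTop : Tendsto T atTop atTop
  tendsto_charFun (s : ℝ) : Tendsto (fun n => charFun (ν n) (s / T n) / T n) atTop
    (𝓝 (√(2 * Real.pi) * Real.exp (-(1 / 2) * s ^ 2) : ℝ))
  exists_dominating (K : ℝ) : ∃ g : ℝ → ℝ, Integrable g ∧ ∀ᶠ n in atTop, ∀ s : ℝ,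
    |s| ≤ K * T n → ‖charFun (ν n) (s / T n) / T n‖ ≤ g s

variable {ν : ℕ → Measure ℝ} [∀ n, IsFiniteMeasure (ν n)] {T : ℕ → ℝ}

lemma integral_sqrt_two_pi_mul_gaussian :
    ∫ s : ℝ, √(2 * Real.pi) * Real.exp (-(1 / 2) * s ^ 2) = 2 * Real.pi := by
  rw [integral_const_mul, integral_gaussian, div_div_eq_mul_div, div_one, mul_comm Real.pi,
    Real.mul_self_sqrt (by positivity)]

lemma HasGaussianCharFunLimit.tendsto_integral_mul (h : HasGaussianCharFunLimit ν T)
    {k : ℝ → ℂ} (hk : Continuous k) (hsupp : HasCompactSupport k) (η : ℝ) :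
    Tendsto (fun n => ∫ s : ℝ, k ((η - s / T n) / (2 * Real.pi)) * (charFun (ν n) (s / T n) / T n))
      atTop (𝓝 (∫ s : ℝ, k (η / (2 * Real.pi)) *
        ((√(2 * Real.pi) * Real.exp (-(1 / 2) * s ^ 2) : ℝ) : ℂ))) := by
  obtain ⟨B, hB⟩ := hk.bounded_above_of_compact_support hsupp
  obtain ⟨R, hR⟩ := hsupp.isCompact.isBounded.exists_norm_le
  obtain ⟨g, hg, hdom⟩ := h.exists_dominating (|η| + 2 * Real.pi * R)
  refine tendsto_integral_filter_of_dominated_convergence (fun s => B * |g s|)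
    (Eventually.of_forall fun n => ?_) ?_ (hg.abs.const_mul B) (Eventually.of_forall fun s => ?_)
  · exact (hk.comp (by fun_prop)).aestronglyMeasurable.mul
      ((continuous_charFun.comp (by fun_prop)).div_const _).aestronglyMeasurable
  · filter_upwards [hdom, h.tendsto_atTop.eventually_gt_atTop 0] with n hn hT
    refine Eventually.of_forall fun s => ?_
    rw [norm_mul]
    rcases eq_or_ne (k ((η - s / T n) / (2 * Real.pi))) 0 with h0 | h0
    · rw [h0, norm_zero, zero_mul]
      exact mul_nonneg ((norm_nonneg _).trans (hB 0)) (abs_nonneg _)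
    · refine mul_le_mul (hB _) ((hn s ?_).trans (le_abs_self _)) (norm_nonneg _)
        ((norm_nonneg _).trans (hB 0))
      have hle := hR _ (subset_tsupport k h0)
      rw [Real.norm_eq_abs, abs_div, abs_of_pos Real.two_pi_pos, div_le_iff₀ Real.two_pi_pos]
        at hle
      have hquot : |s| / T n ≤ |η| + 2 * Real.pi * R := by
        have := abs_sub_abs_le_abs_sub (s / T n) η
        rw [abs_sub_comm, abs_div, abs_of_pos hT] at this
        linarith
      rwa [div_le_iff₀ hT] at hquot
  · refine Tendsto.mul ((hk.tendsto _).comp ?_) (h.tendsto_charFun s)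
    simpa using ((tendsto_const_nhds (x := s)).div_atTop h.tendsto_atTop).const_sub η
      |>.div_const (2 * Real.pi)

lemma HasGaussianCharFunLimit.tendsto_integral_fourier_mul_exp (h : HasGaussianCharFunLimit ν T)
    {k : ℝ → ℂ} (hk : Continuous k) (hsupp : HasCompactSupport k) (η : ℝ) :
    Tendsto (fun n => ∫ v : ℝ, 𝓕 k v * Complex.exp (η * v * Complex.I) ∂(ν n)) atTop
      (𝓝 (k (η / (2 * Real.pi)))) := by
  have hlim : (2 * Real.pi)⁻¹ • ∫ s : ℝ, k (η / (2 * Real.pi)) *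
      ((√(2 * Real.pi) * Real.exp (-(1 / 2) * s ^ 2) : ℝ) : ℂ) = k (η / (2 * Real.pi)) := by
    rw [integral_const_mul, integral_complex_ofReal, integral_sqrt_two_pi_mul_gaussian,
      mul_comm (k _), ← Complex.real_smul, smul_smul, inv_mul_cancel₀ Real.two_pi_pos.ne', one_smul]
  rw [← hlim]
  refine ((h.tendsto_integral_mul hk hsupp η).const_smul (2 * Real.pi)⁻¹).congr' ?_
  filter_upwards [h.tendsto_atTop.eventually_gt_atTop 0] with n hT
  rw [integral_fourier_mul_exp _ (hk.integrable_of_hasCompactSupport hsupp),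
    integral_eq_smul_integral_comp_sub_div (fun ξ => k ξ * charFun _ (η - 2 * Real.pi * ξ)) η hT,
    mul_inv (2 * Real.pi) (T n), ← smul_smul (2 * Real.pi)⁻¹, ← integral_smul (T n)⁻¹]
  congr 2 with s
  rw [mul_div_cancel₀ _ Real.two_pi_pos.ne', sub_sub_cancel, Complex.real_smul]
  push_cast
  ring

/-- The measure `ν` weighted by the positive kernel `fejerKernel`. -/
def fejerWeighted (ν : Measure ℝ) : Measure ℝ :=
  ν.withDensity fun v => ENNReal.ofReal (fejerKernel v)

lemma integral_fejerWeighted {E : Type*} [NormedAddCommGroup E] [NormedSpace ℝ E]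
    (ν : Measure ℝ) (g : ℝ → E) : ∫ v, g v ∂(fejerWeighted ν) = ∫ v, fejerKernel v • g v ∂ν := by
  rw [fejerWeighted, integral_withDensity_eq_integral_toReal_smul
    continuous_fejerKernel.measurable.ennreal_ofReal (by simp)]
  simp_rw [ENNReal.toReal_ofReal (fejerKernel_pos _).le]

lemma charFun_fejerWeighted (ν : Measure ℝ) (η : ℝ) : charFun (fejerWeighted ν) η =
    ∫ v : ℝ, (fejerKernel v : ℂ) * Complex.exp (η * v * Complex.I) ∂ν := by
  rw [charFun_apply_real, integral_fejerWeighted]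
  simp_rw [Complex.real_smul]

instance isFiniteMeasure_fejerWeighted_volume : IsFiniteMeasure (fejerWeighted volume) :=
  isFiniteMeasure_withDensity_ofReal integrable_fejerKernel.2

instance isFiniteMeasure_fejerWeighted (ν : Measure ℝ) [IsFiniteMeasure ν] :
    IsFiniteMeasure (fejerWeighted ν) :=
  isFiniteMeasure_withDensity_ofReal (Integrable.mono' (integrable_const (2 * ∫ ξ, tent ξ))
    continuous_fejerKernel.aestronglyMeasurable (Eventually.of_forall fun v =>
      (Real.norm_of_nonneg (fejerKernel_pos v).le).trans_le (fejerKernel_le v))).2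

lemma HasGaussianCharFunLimit.tendsto_fejerWeighted (h : HasGaussianCharFunLimit ν T) :
    Tendsto (β := FiniteMeasure ℝ) (fun n => ⟨fejerWeighted (ν n), inferInstance⟩) atTop
      (𝓝 ⟨fejerWeighted volume, inferInstance⟩) := by
  have hcharFun (η : ℝ) : charFun (fejerWeighted volume) η = fejer (η / (2 * Real.pi)) := by
    rw [charFun_fejerWeighted, integral_fejerKernel_mul_exp]
  refine finiteMeasure_tendsto_of_tendsto_charFun (fun h0 => ?_) fun η => ?_
  · have hzero : charFun (fejerWeighted volume) 0 = 0 := by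
      rw [show fejerWeighted volume = 0 from congrArg Subtype.val h0, charFun_zero_measure]
    rw [hcharFun] at hzero
    norm_num [fejer, tent] at hzero
  · simp only [FiniteMeasure.toMeasure_mk, hcharFun, charFun_fejerWeighted, ← fourier_fejer]
    exact h.tendsto_integral_fourier_mul_exp continuous_fejer hasCompactSupport_fejer η

lemma HasGaussianCharFunLimit.tendsto_integral (h : HasGaussianCharFunLimit ν T) {g : ℝ → ℝ}
    (hg : Continuous g) {M : ℝ} (hM : ∀ v, |g v| ≤ M * fejerKernel v) :
    Tendsto (fun n => ∫ v, g v ∂(ν n)) atTop (𝓝 (∫ v, g v)) := by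
  let q : BoundedContinuousFunction ℝ ℝ :=
    BoundedContinuousFunction.ofNormedAddCommGroup (fun v => g v / fejerKernel v)
      (hg.div continuous_fejerKernel fun v => (fejerKernel_pos v).ne') M (fun v => by
        rw [Real.norm_eq_abs, abs_div, abs_of_pos (fejerKernel_pos v),
          div_le_iff₀ (fejerKernel_pos v)]
        exact hM v)
  have hq (v : ℝ) : fejerKernel v • q v = g v := mul_div_cancel₀ _ (fejerKernel_pos v).ne'
  simpa only [FiniteMeasure.toMeasure_mk, integral_fejerWeighted, hq] using
    FiniteMeasure.tendsto_iff_forall_integral_tendsto.1 h.tendsto_fejerWeighted q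

lemma exists_continuous_between_indicator_exp {a b : ℝ} (hab : a < b) :
    ∃ g : ℝ → ℝ, Continuous g ∧ (∀ v, (Iic a).indicator Real.exp v ≤ g v) ∧
      ∀ v, g v ≤ (Iio b).indicator Real.exp v := by
  obtain ⟨χ, h0, h1, h01⟩ := exists_continuous_zero_one_of_isClosed (isClosed_Ici (a := b))
    (isClosed_Iic (a := a)) (disjoint_left.2 fun v hb ha => (hab.trans_le hb).not_ge ha)
  refine ⟨fun v => χ v * Real.exp v, by fun_prop, fun v => ?_, fun v => ?_⟩
  · refine indicator_apply_le' (fun hv => ?_) fun _ => mul_nonneg (h01 v).1 (Real.exp_pos v).le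
    simp [h1 hv]
  · refine le_indicator_apply (fun _ => ?_) fun hv => ?_
    · exact mul_le_of_le_one_left (Real.exp_pos v).le (h01 v).2
    · simp [h0 (not_lt.1 hv : b ≤ v)]

lemma integrableOn_exp_Iic_of_isFiniteMeasure (ν : Measure ℝ) [IsFiniteMeasure ν] (b : ℝ) :
    IntegrableOn Real.exp (Iic b) ν :=
  (integrable_const (Real.exp b)).mono' Real.continuous_exp.aestronglyMeasurable
    (ae_restrict_of_forall_mem measurableSet_Iic fun v hv => by
      rw [Real.norm_of_nonneg (Real.exp_pos v).le]
      exact Real.exp_le_exp.2 hv)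

lemma setIntegral_exp_le_integral_and_integral_le {ν : Measure ℝ} {a b : ℝ}
    (hν : IntegrableOn Real.exp (Iic b) ν) {g : ℝ → ℝ} (hg : Continuous g) (hab : a < b)
    (hlow : ∀ v, (Iic a).indicator Real.exp v ≤ g v)
    (hupp : ∀ v, g v ≤ (Iio b).indicator Real.exp v) :
    ∫ v in Iic a, Real.exp v ∂ν ≤ ∫ v, g v ∂ν ∧ ∫ v, g v ∂ν ≤ ∫ v in Iio b, Real.exp v ∂ν := by
  have hIio := (integrable_indicator_iff measurableSet_Iio).2 (hν.mono_set Iio_subset_Iic_self)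
  have hIic := (integrable_indicator_iff measurableSet_Iic).2
    (hν.mono_set (Iic_subset_Iic.2 hab.le))
  have hg_int : Integrable g ν := hIio.mono' hg.aestronglyMeasurable
    (Eventually.of_forall fun v => by
      rw [Real.norm_of_nonneg ((indicator_nonneg (fun _ _ => (Real.exp_pos _).le) v).trans
        (hlow v))]
      exact hupp v)
  rw [← integral_indicator measurableSet_Iic, ← integral_indicator measurableSet_Iio]
  exact ⟨integral_mono hIic hg_int hlow, integral_mono hg_int hIio hupp⟩

lemma HasGaussianCharFunLimit.exists_tendsto_between_setIntegral_exp
    (h : HasGaussianCharFunLimit ν T) {a b : ℝ} (hab : a < b) :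
    ∃ (I : ℕ → ℝ) (l : ℝ), Tendsto I atTop (𝓝 l) ∧ l ∈ Icc (Real.exp a) (Real.exp b) ∧
      ∀ n, I n ∈ Icc (∫ v in Iic a, Real.exp v ∂(ν n)) (∫ v in Iio b, Real.exp v ∂(ν n)) := by
  obtain ⟨g, hg, hlow, hupp⟩ := exists_continuous_between_indicator_exp hab
  obtain ⟨M, hM⟩ := exists_exp_le_mul_fejerKernel b
  have hle (v : ℝ) : |g v| ≤ M * fejerKernel v := by
    rw [abs_of_nonneg ((indicator_nonneg (fun _ _ => (Real.exp_pos _).le) v).trans (hlow v))]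
    refine (hupp v).trans (indicator_apply_le' (fun hv => hM v (le_of_lt hv)) fun _ => ?_)
    refine mul_nonneg ?_ (fejerKernel_pos v).le
    exact (pos_of_mul_pos_left ((Real.exp_pos b).trans_le (hM b le_rfl))
      (fejerKernel_pos b).le).le
  refine ⟨_, _, h.tendsto_integral hg hle, ?_, fun n => setIntegral_exp_le_integral_and_integral_le
    (integrableOn_exp_Iic_of_isFiniteMeasure (ν n) b) hg hab hlow hupp⟩
  rw [← integral_exp_Iic a, ← integral_exp_Iic b, integral_Iic_eq_integral_Iio (x := b)]
  exact setIntegral_exp_le_integral_and_integral_le (integrableOn_exp_Iic b) hg hab hlow hupp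

theorem HasGaussianCharFunLimit.tendsto_of_setIntegral_exp (h : HasGaussianCharFunLimit ν T)
    {a : ℝ} {b : ℕ → ℝ} (hlow : ∀ᶠ n in atTop, ∫ v in Iio a, Real.exp v ∂(ν n) ≤ b n)
    (hupp : ∀ᶠ n in atTop, b n ≤ ∫ v in Iic a, Real.exp v ∂(ν n)) :
    Tendsto b atTop (𝓝 (Real.exp a)) := by
  have hexp := Real.continuous_exp.tendsto a
  refine tendsto_order.2 ⟨fun c hc => ?_, fun c hc => ?_⟩
  · obtain ⟨a', hca, ha⟩ := (((hexp.mono_left nhdsWithin_le_nhds).eventually_const_lt hc).and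
      (self_mem_nhdsWithin (s := Iio a))).exists
    obtain ⟨I, l, hI, hl, hn⟩ := h.exists_tendsto_between_setIntegral_exp ha
    filter_upwards [hI.eventually_const_lt (hca.trans_le hl.1), hlow] with n h1 h2
    exact h1.trans_le ((hn n).2.trans h2)
  · obtain ⟨a', hca, ha⟩ := (((hexp.mono_left nhdsWithin_le_nhds).eventually_lt_const hc).and
      (self_mem_nhdsWithin (s := Ioi a))).exists
    obtain ⟨I, l, hI, hl, hn⟩ := h.exists_tendsto_between_setIntegral_exp ha
    filter_upwards [hI.eventually_lt_const (hl.2.trans_lt hca), hupp] with n h1 h2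
    exact (h2.trans (hn n).1).trans_lt h1

end LocalLimit

section ComplexBounds

variable {E : Type*} [NormedAddCommGroup E]

lemma mapsTo_closedBall_of_norm_le {g : ℂ → E} {c : ℂ} {R M : ℝ}
    (hle : ∀ z ∈ Metric.ball c R, ‖g z‖ ≤ M) :
    MapsTo g (Metric.ball c R) (Metric.closedBall (g c) (2 * M)) := by
  intro z hz
  rw [mem_closedBall_iff_norm, two_mul]
  exact (norm_sub_le _ _).trans
    (add_le_add (hle z hz) (hle c (Metric.mem_ball_self (Metric.pos_of_mem_ball hz))))

lemma norm_sub_le_of_norm_le [NormedSpace ℂ E] {g : ℂ → E} {c z : ℂ} {R M : ℝ}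
    (hg : DifferentiableOn ℂ g (Metric.ball c R)) (hle : ∀ z ∈ Metric.ball c R, ‖g z‖ ≤ M)
    (hz : z ∈ Metric.ball c R) : ‖g z - g c‖ ≤ 2 * M / R * ‖z - c‖ := by
  simpa only [dist_eq_norm] using
    Complex.dist_le_div_mul_dist_of_mapsTo_ball hg (mapsTo_closedBall_of_norm_le hle) hz

lemma norm_taylor_one_sub_le {g g' : ℂ → ℂ} {c z : ℂ} {r M : ℝ}
    (hg : ∀ z ∈ Metric.closedBall c r, HasDerivAt g (g' z) z)
    (hle : ∀ z ∈ Metric.closedBall c r, ‖g' z - g' c‖ ≤ M) (hz : z ∈ Metric.closedBall c r) :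
    ‖g z - g c - g' c * (z - c)‖ ≤ M * ‖z - c‖ := by
  have hderiv : ∀ u ∈ Metric.closedBall c r,
      HasDerivAt (fun z => g z - g' c * (z - c)) (g' u - g' c) u := fun u hu => by
    simpa only [mul_one] using
      (hg u hu).fun_sub (((hasDerivAt_id' u).sub_const c).const_mul (g' c))
  have h := (convex_closedBall c r).norm_image_sub_le_of_norm_hasDerivWithin_le
    (fun u hu => (hderiv u hu).hasDerivWithinAt) hle
    (Metric.mem_closedBall_self (Metric.nonneg_of_mem_closedBall hz)) hz
  rwa [sub_self, mul_zero, sub_zero, sub_right_comm] at h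

lemma norm_taylor_two_sub_le {g g' g'' : ℂ → ℂ} {c z : ℂ} {r M : ℝ}
    (hg : ∀ z ∈ Metric.closedBall c r, HasDerivAt g (g' z) z)
    (hg' : ∀ z ∈ Metric.closedBall c r, HasDerivAt g' (g'' z) z)
    (hle : ∀ z ∈ Metric.closedBall c r, ‖g'' z - g'' c‖ ≤ M) (hz : z ∈ Metric.closedBall c r) :
    ‖g z - g c - g' c * (z - c) - g'' c * (z - c) ^ 2 / 2‖ ≤ M * r * ‖z - c‖ := by
  have hr : 0 ≤ r := Metric.nonneg_of_mem_closedBall hz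
  have hc : c ∈ Metric.closedBall c r := Metric.mem_closedBall_self hr
  have hM : 0 ≤ M := (norm_nonneg _).trans (hle c hc)
  have hderiv : ∀ u ∈ Metric.closedBall c r,
      HasDerivAt (fun z => g z - g'' c * (z - c) ^ 2 / 2) (g' u - g'' c * (u - c)) u :=
    fun u hu => ((hg u hu).fun_sub (((((hasDerivAt_id' u).sub_const c).fun_pow 2).const_mul
      (g'' c)).div_const 2)).congr_deriv (by norm_num; ring)
  have h := norm_taylor_one_sub_le hderiv (M := M * r) (fun u hu => by
    rw [sub_self, mul_zero, sub_zero, sub_right_comm]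
    exact (norm_taylor_one_sub_le hg' hle hu).trans
      (mul_le_mul_of_nonneg_left (mem_closedBall_iff_norm.1 hu) hM)) hz
  convert h using 2
  ring

lemma norm_taylor_two_sub_le_of_norm_le {g : ℂ → ℂ} {c z : ℂ} {R M : ℝ}
    (hg : DifferentiableOn ℂ g (Metric.ball c R))
    (hle : ∀ z ∈ Metric.ball c R, ‖iteratedDeriv 2 g z‖ ≤ M) (hz : z ∈ Metric.ball c R) :
    ‖g z - g c - deriv g c * (z - c) - iteratedDeriv 2 g c * (z - c) ^ 2 / 2‖ ≤
      2 * M / R * ‖z - c‖ ^ 3 := by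
  have hR : 0 < R := Metric.pos_of_mem_ball hz
  have hM : 0 ≤ M := (norm_nonneg _).trans (hle z hz)
  have hsub : Metric.closedBall c ‖z - c‖ ⊆ Metric.ball c R :=
    Metric.closedBall_subset_ball (mem_ball_iff_norm.1 hz)
  have hg1 := hg.deriv Metric.isOpen_ball
  have hg2 := hg1.deriv Metric.isOpen_ball
  have hderiv {k : ℂ → ℂ} (hk : DifferentiableOn ℂ k (Metric.ball c R)) :
      ∀ u ∈ Metric.closedBall c ‖z - c‖, HasDerivAt k (deriv k u) u := fun u hu =>
    (hk.differentiableAt (Metric.isOpen_ball.mem_nhds (hsub hu))).hasDerivAt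
  simp only [iteratedDeriv_succ, iteratedDeriv_zero] at hle ⊢
  refine (norm_taylor_two_sub_le (hderiv hg) (hderiv hg1) (M := 2 * M / R * ‖z - c‖)
    (fun u hu => (norm_sub_le_of_norm_le hg2 hle (hsub hu)).trans ?_)
    (mem_closedBall_iff_norm.2 le_rfl)).trans_eq (by ring)
  exact mul_le_mul_of_nonneg_left (mem_closedBall_iff_norm.1 hu) (by positivity)

lemma deriv_im_eq_zero_of_real {g : ℂ → ℂ} {t : ℝ} (hg : DifferentiableAt ℂ g t)
    (hreal : ∀ᶠ s : ℝ in 𝓝 t, (g s).im = 0) : (deriv g t).im = 0 := by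
  have him : HasDerivAt (fun s : ℝ => (g s).im) (deriv g t).im t :=
    Complex.imCLM.hasFDerivAt.comp_hasDerivAt t hg.hasDerivAt.comp_ofReal
  exact him.unique ((hasDerivAt_const t (0 : ℝ)).congr_of_eventuallyEq hreal)

end ComplexBounds

section RealCalculus

lemma exists_sub_eq_mul_sub_of_hasDerivAt_neg {g g' : ℝ → ℝ} {a b : ℝ} (hab : a < b)
    (hg : ∀ x ∈ Icc a b, HasDerivAt g (-g' x) x) : ∃ ξ ∈ Ioo a b, g a - g b = g' ξ * (b - a) := by
  obtain ⟨ξ, hξ, h⟩ := exists_hasDerivAt_eq_slope g (fun x => -g' x) hab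
    (fun x hx => (hg x hx).continuousAt.continuousWithinAt)
    fun x hx => hg x (Ioo_subset_Icc_self hx)
  refine ⟨ξ, hξ, ?_⟩
  rw [eq_div_iff (sub_pos.2 hab).ne'] at h
  linarith

lemma antitoneOn_Ioo_of_hasDerivAt_nonpos {g g' : ℝ → ℝ} {a b : ℝ}
    (hg : ∀ x ∈ Ioo a b, HasDerivAt g (g' x) x) (hg' : ∀ x ∈ Ioo a b, g' x ≤ 0) :
    AntitoneOn g (Ioo a b) := by
  refine antitoneOn_of_hasDerivWithinAt_nonpos (f' := g') (convex_Ioo a b)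
    (fun x hx => (hg x hx).continuousAt.continuousWithinAt) ?_ ?_ <;> rw [interior_Ioo]
  exacts [fun x hx => (hg x hx).hasDerivWithinAt, hg']

lemma frequently_hasDerivAt_nonpos_of_tendsto_atTop {g g' : ℝ → ℝ} {a : ℝ}
    (hlim : Tendsto g (𝓝[>] a) atTop) (hg : ∀ᶠ x in 𝓝[>] a, HasDerivAt g (g' x) x) :
    ∃ᶠ x in 𝓝[>] a, g' x ≤ 0 := by
  intro hpos
  obtain ⟨b, hab, hsub⟩ := mem_nhdsGT_iff_exists_Ioo_subset.1 (hg.and hpos)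
  have hmono : MonotoneOn g (Ioo a b) := by
    refine monotoneOn_of_hasDerivWithinAt_nonneg (f' := g') (convex_Ioo a b)
      (fun x hx => (hsub hx).1.continuousAt.continuousWithinAt) ?_ ?_ <;> rw [interior_Ioo]
    exacts [fun x hx => (hsub hx).1.hasDerivWithinAt, fun x hx => (not_le.1 (hsub hx).2).le]
  obtain ⟨m, hm⟩ := exists_between (mem_Ioi.1 hab)
  obtain ⟨x, hxg, hx⟩ := ((hlim.eventually_gt_atTop (g m)).and (Ioo_mem_nhdsGT hm.1)).exists
  exact hxg.not_ge (hmono ⟨hx.1, hx.2.trans hm.2⟩ hm hx.2.le)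

lemma eventually_lt_of_gap {g : ℝ → ℝ} {a m M : ℝ} (hmM : m ≤ M)
    (hcont : ∀ᶠ x in 𝓝[>] a, ContinuousAt g x) (hgap : ∀ᶠ x in 𝓝[>] a, m ≤ g x → M < g x)
    (hfreq : ∃ᶠ x in 𝓝[>] a, m ≤ g x) : ∀ᶠ x in 𝓝[>] a, M < g x := by
  obtain ⟨b, hab, hsub⟩ := mem_nhdsGT_iff_exists_Ioo_subset.1 (hcont.and hgap)
  obtain ⟨y, hmy, hy⟩ := (hfreq.and_eventually (Ioo_mem_nhdsGT hab)).exists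
  filter_upwards [Ioo_mem_nhdsGT hab] with x hx
  refine (hsub hx).2 (le_of_not_gt fun hxm => ?_)
  obtain ⟨s, hs, hsm⟩ := isPreconnected_Ioo.intermediate_value hx hy
    (fun z hz => (hsub hz).1.continuousWithinAt) (⟨hxm.le, hmy⟩ : m ∈ Icc (g x) (g y))
  exact (hmM.trans_lt ((hsub hs).2 hsm.ge)).ne hsm.symm

lemma sq_div_le_sqrt_add_sq_sub {t y K : ℝ} (ht : 0 < t) (hy : |y| ≤ K * t) :
    y ^ 2 / ((K + 2) * t) ≤ √(t ^ 2 + y ^ 2) - t := by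
  set r := √(t ^ 2 + y ^ 2)
  have hr : r ^ 2 = t ^ 2 + y ^ 2 := Real.sq_sqrt (by positivity)
  have htr : t ≤ r := Real.le_sqrt_of_sq_le (by nlinarith)
  have hrle : r ≤ t + |y| :=
    Real.sqrt_le_iff.2 ⟨by positivity, by nlinarith [sq_abs y, abs_nonneg y]⟩
  have hK : 0 < (K + 2) * t := by nlinarith [abs_nonneg y]
  rw [div_le_iff₀ hK]
  calc y ^ 2 = (r - t) * (r + t) := by linarith
    _ ≤ (r - t) * ((K + 2) * t) :=
      mul_le_mul_of_nonneg_left (by linarith) (sub_nonneg.2 htr)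

end RealCalculus

/-- `-φ'` on the real axis, the function whose inverse `ψ` gives the saddle points. -/
def negDeriv (φ : ℂ → ℂ) (t : ℝ) : ℝ := -(deriv φ t).re

/-- `φ''` on the real axis. -/
def secondDeriv (φ : ℂ → ℂ) (t : ℝ) : ℝ := (iteratedDeriv 2 φ t).re

/-- The conditions on `φ` and `χ` in Ingham's theorem that are local at each point of an interval
`(0, t₀)`: the functions are holomorphic on the discs `|z - t| < δ t` and real on the real axis,
`χ`, `-φ'` and `φ''` are positive there, and `φ''` and `χ` are comparable on each disc to their
values at its centre, with a common constant `C`. -/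
structure InghamData (φ χ : ℂ → ℂ) (δ : ℝ → ℝ) (t₀ C : ℝ) : Prop where
  t₀_pos : 0 < t₀
  one_le : 1 ≤ C
  δ_pos : ∀ t ∈ Ioo 0 t₀, 0 < δ t
  δ_le : ∀ t ∈ Ioo 0 t₀, δ t ≤ t
  lipschitzOn_δ : LipschitzOnWith 1 δ (Ioo 0 t₀)
  differentiableOn_φ : ∀ t ∈ Ioo 0 t₀, DifferentiableOn ℂ φ (Metric.ball (t : ℂ) (δ t))
  differentiableOn_χ : ∀ t ∈ Ioo 0 t₀, DifferentiableOn ℂ χ (Metric.ball (t : ℂ) (δ t))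
  φ_im : ∀ t ∈ Ioo 0 t₀, (φ t).im = 0
  χ_im : ∀ t ∈ Ioo 0 t₀, (χ t).im = 0
  χ_re_pos : ∀ t ∈ Ioo 0 t₀, 0 < (χ t).re
  negDeriv_pos : ∀ t ∈ Ioo 0 t₀, 0 < negDeriv φ t
  secondDeriv_pos : ∀ t ∈ Ioo 0 t₀, 0 < secondDeriv φ t
  norm_iteratedDeriv_add_le : ∀ t ∈ Ioo 0 t₀, ∀ w : ℂ, ‖w‖ < δ t →
    ‖iteratedDeriv 2 φ (t + w)‖ ≤ C * ‖iteratedDeriv 2 φ t‖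
  norm_χ_add_le : ∀ t ∈ Ioo 0 t₀, ∀ w : ℂ, ‖w‖ < δ t → ‖χ (t + w)‖ ≤ C * ‖χ t‖

/-- The multiple of `δ t` up to which the Taylor expansions at `t` of `φ` and `χ` are dominated
by their leading terms. -/
def nearRadius (C : ℝ) : ℝ := 1 / (8 * C)

namespace InghamData

variable {φ χ : ℂ → ℂ} {δ : ℝ → ℝ} {t₀ C t s : ℝ}

lemma ball_mem_nhds (S : InghamData φ χ δ t₀ C) (ht : t ∈ Ioo 0 t₀) :
    Metric.ball (t : ℂ) (δ t) ∈ 𝓝 (t : ℂ) :=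
  Metric.ball_mem_nhds _ (S.δ_pos t ht)

lemma differentiableAt_deriv (S : InghamData φ χ δ t₀ C) (ht : t ∈ Ioo 0 t₀) :
    DifferentiableAt ℂ (deriv φ) t :=
  ((S.differentiableOn_φ t ht).deriv Metric.isOpen_ball).differentiableAt (S.ball_mem_nhds ht)

lemma φ_eq (S : InghamData φ χ δ t₀ C) (ht : t ∈ Ioo 0 t₀) : φ t = (φ t).re :=
  Complex.ext rfl (S.φ_im t ht)

lemma χ_eq (S : InghamData φ χ δ t₀ C) (ht : t ∈ Ioo 0 t₀) : χ t = (χ t).re :=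
  Complex.ext rfl (S.χ_im t ht)

lemma deriv_eq (S : InghamData φ χ δ t₀ C) (ht : t ∈ Ioo 0 t₀) :
    deriv φ t = -(negDeriv φ t : ℂ) := by
  have him : (deriv φ t).im = 0 := deriv_im_eq_zero_of_real
    ((S.differentiableOn_φ t ht).differentiableAt (S.ball_mem_nhds ht))
    (eventually_of_mem (Ioo_mem_nhds ht.1 ht.2) S.φ_im)
  exact Complex.ext (by simp [negDeriv]) (by simp [him])

lemma iteratedDeriv_two_eq (S : InghamData φ χ δ t₀ C) (ht : t ∈ Ioo 0 t₀) :
    iteratedDeriv 2 φ t = secondDeriv φ t := by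
  refine Complex.ext rfl ?_
  rw [iteratedDeriv_succ, iteratedDeriv_one]
  refine deriv_im_eq_zero_of_real (S.differentiableAt_deriv ht)
    (eventually_of_mem (Ioo_mem_nhds ht.1 ht.2) fun s hs => ?_)
  simp [S.deriv_eq hs]

lemma norm_iteratedDeriv_le (S : InghamData φ χ δ t₀ C) (ht : t ∈ Ioo 0 t₀) :
    ∀ z ∈ Metric.ball (t : ℂ) (δ t), ‖iteratedDeriv 2 φ z‖ ≤ C * secondDeriv φ t := fun z hz => by
  have h := S.norm_iteratedDeriv_add_le t ht (z - t) (mem_ball_iff_norm.1 hz)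
  rwa [add_sub_cancel, S.iteratedDeriv_two_eq ht,
    Complex.norm_of_nonneg (S.secondDeriv_pos t ht).le] at h

lemma norm_χ_le (S : InghamData φ χ δ t₀ C) (ht : t ∈ Ioo 0 t₀) :
    ∀ z ∈ Metric.ball (t : ℂ) (δ t), ‖χ z‖ ≤ C * (χ t).re := fun z hz => by
  have h := S.norm_χ_add_le t ht (z - t) (mem_ball_iff_norm.1 hz)
  rwa [add_sub_cancel, S.χ_eq ht, Complex.norm_of_nonneg (S.χ_re_pos t ht).le] at h

lemma hasDerivAt_re_φ (S : InghamData φ χ δ t₀ C) (ht : t ∈ Ioo 0 t₀) :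
    HasDerivAt (fun t : ℝ => (φ t).re) (-negDeriv φ t) t := by
  rw [negDeriv, neg_neg]
  exact ((S.differentiableOn_φ t ht).differentiableAt
    (S.ball_mem_nhds ht)).hasDerivAt.real_of_complex

lemma hasDerivAt_re_χ (S : InghamData φ χ δ t₀ C) (ht : t ∈ Ioo 0 t₀) :
    HasDerivAt (fun t : ℝ => (χ t).re) (deriv χ t).re t :=
  ((S.differentiableOn_χ t ht).differentiableAt (S.ball_mem_nhds ht)).hasDerivAt.real_of_complex

lemma hasDerivAt_negDeriv (S : InghamData φ χ δ t₀ C) (ht : t ∈ Ioo 0 t₀) :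
    HasDerivAt (negDeriv φ) (-secondDeriv φ t) t := by
  rw [secondDeriv, iteratedDeriv_succ, iteratedDeriv_one]
  exact (S.differentiableAt_deriv ht).hasDerivAt.real_of_complex.neg

lemma continuousAt_secondDeriv (S : InghamData φ χ δ t₀ C) (ht : t ∈ Ioo 0 t₀) :
    ContinuousAt (secondDeriv φ) t := by
  have h : ContinuousAt (iteratedDeriv 2 φ) (t : ℂ) := by
    rw [iteratedDeriv_succ, iteratedDeriv_one]
    exact ((((S.differentiableOn_φ t ht).deriv Metric.isOpen_ball).deriv
      Metric.isOpen_ball).differentiableAt (S.ball_mem_nhds ht)).continuousAt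
  exact Complex.continuous_re.continuousAt.comp
    (h.comp (f := ((↑) : ℝ → ℂ)) Complex.continuous_ofReal.continuousAt)

lemma continuousAt_δ (S : InghamData φ χ δ t₀ C) (ht : t ∈ Ioo 0 t₀) : ContinuousAt δ t :=
  S.lipschitzOn_δ.continuousOn.continuousAt (Ioo_mem_nhds ht.1 ht.2)

lemma ofReal_mem_ball (h : |s - t| < δ t) : (s : ℂ) ∈ Metric.ball (t : ℂ) (δ t) := by
  rwa [mem_ball_iff_norm, ← Complex.ofReal_sub, Complex.norm_real]

lemma secondDeriv_le (S : InghamData φ χ δ t₀ C) (ht : t ∈ Ioo 0 t₀) (h : |s - t| < δ t) :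
    secondDeriv φ s ≤ C * secondDeriv φ t :=
  (Complex.re_le_norm _).trans (S.norm_iteratedDeriv_le ht s (ofReal_mem_ball h))

lemma χ_re_le (S : InghamData φ χ δ t₀ C) (ht : t ∈ Ioo 0 t₀) (h : |s - t| < δ t) :
    (χ s).re ≤ C * (χ t).re :=
  (Complex.re_le_norm _).trans (S.norm_χ_le ht s (ofReal_mem_ball h))

lemma antitoneOn_re_φ (S : InghamData φ χ δ t₀ C) :
    AntitoneOn (fun t : ℝ => (φ t).re) (Ioo 0 t₀) :=
  antitoneOn_Ioo_of_hasDerivAt_nonpos (fun _ => S.hasDerivAt_re_φ)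
    fun t ht => neg_nonpos.2 (S.negDeriv_pos t ht).le

lemma secondDeriv_mul_δ_le (S : InghamData φ χ δ t₀ C) (ht : t ∈ Ioo 0 (t₀ / 2)) :
    secondDeriv φ t * δ t ≤ 3 * C * negDeriv φ t := by
  have ht0 : t ∈ Ioo 0 t₀ := ⟨ht.1, by linarith [ht.1, ht.2]⟩
  have hδ := S.δ_pos t ht0
  have hsub : Icc t (t + δ t / 3) ⊆ Ioo 0 t₀ := fun x hx =>
    ⟨ht.1.trans_le hx.1, by linarith [hx.2, ht.2, S.δ_le t ht0]⟩
  have hlt : t < t + δ t / 3 := by linarith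
  obtain ⟨ξ, hξ, hmean⟩ := exists_sub_eq_mul_sub_of_hasDerivAt_neg hlt
    fun x hx => S.hasDerivAt_negDeriv (hsub hx)
  have hξ0 := hsub (Ioo_subset_Icc_self hξ)
  have hdist : |t - ξ| < δ t / 3 := abs_lt.2 ⟨by linarith [hξ.2], by linarith [hξ.1]⟩
  have hδξ : |t - ξ| < δ ξ := by
    have := S.lipschitzOn_δ.le_add_mul ht0 hξ0
    rw [NNReal.coe_one, one_mul, Real.dist_eq] at this
    linarith
  calc secondDeriv φ t * δ t
      ≤ C * secondDeriv φ ξ * δ t := mul_le_mul_of_nonneg_right (S.secondDeriv_le hξ0 hδξ) hδ.le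
    _ = 3 * C * (negDeriv φ t - negDeriv φ (t + δ t / 3)) := by rw [hmean]; ring
    _ ≤ 3 * C * negDeriv φ t := by
      have := S.one_le
      have := S.negDeriv_pos _ (hsub (right_mem_Icc.2 hlt.le))
      gcongr
      linarith

lemma half_negDeriv_le (S : InghamData φ χ δ t₀ C) (ht : t ∈ Ioo 0 (t₀ / 2)) (hts : t < s)
    (hs : s ≤ t + δ t / (6 * C ^ 2)) : negDeriv φ t / 2 ≤ negDeriv φ s := by
  have ht0 : t ∈ Ioo 0 t₀ := ⟨ht.1, by linarith [ht.1, ht.2]⟩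
  have hC := S.one_le
  have hδ := S.δ_pos t ht0
  have hstep : δ t / (6 * C ^ 2) < δ t := div_lt_self hδ (by nlinarith)
  obtain ⟨ξ, hξ, hmean⟩ := exists_sub_eq_mul_sub_of_hasDerivAt_neg hts fun x hx =>
    S.hasDerivAt_negDeriv ⟨ht.1.trans_le hx.1, by linarith [hx.2, ht.2, S.δ_le t ht0]⟩
  have hdrop : negDeriv φ t - negDeriv φ s ≤ negDeriv φ t / 2 :=
    calc negDeriv φ t - negDeriv φ s = secondDeriv φ ξ * (s - t) := hmean
      _ ≤ C * secondDeriv φ t * (δ t / (6 * C ^ 2)) := by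
        have := S.secondDeriv_pos t ht0
        refine mul_le_mul (S.secondDeriv_le ht0 ?_) (by linarith) (by linarith) (by positivity)
        exact abs_lt.2 ⟨by linarith [hξ.1], by linarith [hξ.2]⟩
      _ = secondDeriv φ t * δ t / (6 * C) := by field_simp
      _ ≤ negDeriv φ t / 2 := by
        rw [div_le_div_iff₀ (by positivity) two_pos]
        linarith [S.secondDeriv_mul_δ_le ht]
  linarith

lemma half_negDeriv_mul_min_le_sub (S : InghamData φ χ δ t₀ C) {r : ℝ}
    (ht : t ∈ Ioo 0 (t₀ / 2)) (hr : r ∈ Ioo t t₀) :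
    negDeriv φ t / 2 * min (r - t) (δ t / (6 * C ^ 2)) ≤ (φ t).re - (φ r).re := by
  have hC := S.one_le
  have hδ := S.δ_pos t ⟨ht.1, hr.1.trans hr.2⟩
  set m := min (r - t) (δ t / (6 * C ^ 2))
  have hm : 0 < m := lt_min (sub_pos.2 hr.1) (by positivity)
  have hmr : t + m ≤ r := by linarith [min_le_left (r - t) (δ t / (6 * C ^ 2))]
  obtain ⟨ξ, hξ, hmean⟩ := exists_sub_eq_mul_sub_of_hasDerivAt_neg (lt_add_of_pos_right t hm)
    fun x hx => S.hasDerivAt_re_φ ⟨ht.1.trans_le hx.1, by linarith [hx.2, hr.2]⟩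
  calc negDeriv φ t / 2 * m
      ≤ negDeriv φ ξ * m := mul_le_mul_of_nonneg_right (S.half_negDeriv_le ht hξ.1
        (by linarith [hξ.2, min_le_right (r - t) (δ t / (6 * C ^ 2))])) hm.le
    _ = (φ t).re - (φ (t + m : ℝ)).re := by rw [hmean, add_sub_cancel_left]
    _ ≤ (φ t).re - (φ r).re := sub_le_sub_left (S.antitoneOn_re_φ
        ⟨by linarith [ht.1], hmr.trans_lt hr.2⟩ ⟨ht.1.trans hr.1, hr.2⟩ hmr) _

lemma exists_mul_le_sub (S : InghamData φ χ δ t₀ C) {b K : ℝ} (hb : 0 < b) (hK : 0 < K) :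
    ∃ c : ℝ, 0 < c ∧ ∀ t ∈ Ioo 0 (t₀ / 2), ∀ y : ℝ, b * δ t ≤ |y| → |y| ≤ K * t →
      √(t ^ 2 + y ^ 2) < t₀ →
      c * (δ t * negDeriv φ t / t * |y|) ≤ (φ t).re - (φ √(t ^ 2 + y ^ 2)).re := by
  have hC := S.one_le
  have hc : 0 < min (b / (K + 2)) (1 / (6 * C ^ 2 * K)) := by
    refine lt_min ?_ ?_ <;> positivity
  refine ⟨min (b / (K + 2)) (1 / (6 * C ^ 2 * K)) / 2, half_pos hc, fun t ht y hy hyK hr => ?_⟩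
  have ht0 : t ∈ Ioo 0 t₀ := ⟨ht.1, by linarith [ht.1, ht.2]⟩
  have hδ := S.δ_pos t ht0
  have htpos := ht.1
  have hypos : 0 < |y| := lt_of_lt_of_le (by positivity) hy
  have htr : t < √(t ^ 2 + y ^ 2) :=
    Real.lt_sqrt_of_sq_lt (lt_add_of_pos_right _ (by rw [← sq_abs]; positivity))
  have hnear : b / (K + 2) * (δ t / t * |y|) ≤ √(t ^ 2 + y ^ 2) - t :=
    calc b / (K + 2) * (δ t / t * |y|) = b * δ t * |y| / ((K + 2) * t) := by field_simp
      _ ≤ |y| * |y| / ((K + 2) * t) := by gcongr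
      _ = y ^ 2 / ((K + 2) * t) := by rw [abs_mul_abs_self, sq]
      _ ≤ √(t ^ 2 + y ^ 2) - t := sq_div_le_sqrt_add_sq_sub ht.1 hyK
  have hfar : 1 / (6 * C ^ 2 * K) * (δ t / t * |y|) ≤ δ t / (6 * C ^ 2) :=
    calc 1 / (6 * C ^ 2 * K) * (δ t / t * |y|)
        ≤ 1 / (6 * C ^ 2 * K) * (δ t / t * (K * t)) := by gcongr
      _ = δ t / (6 * C ^ 2) := by field_simp
  calc min (b / (K + 2)) (1 / (6 * C ^ 2 * K)) / 2 * (δ t * negDeriv φ t / t * |y|)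
      = negDeriv φ t / 2 * (min (b / (K + 2)) (1 / (6 * C ^ 2 * K)) * (δ t / t * |y|)) := by ring
    _ ≤ negDeriv φ t / 2 * min (√(t ^ 2 + y ^ 2) - t) (δ t / (6 * C ^ 2)) := by
      have := S.negDeriv_pos t ht0
      refine mul_le_mul_of_nonneg_left ?_ (by positivity)
      rw [min_mul_of_nonneg _ _ (by positivity)]
      exact min_le_min hnear hfar
    _ ≤ _ := S.half_negDeriv_mul_min_le_sub ht ⟨htr, hr⟩

lemma norm_χ_sub_le (S : InghamData φ χ δ t₀ C) (ht : t ∈ Ioo 0 t₀) {w : ℂ} (hw : ‖w‖ < δ t) :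
    ‖χ (t + w) - (χ t).re‖ ≤ 2 * (C * (χ t).re) / δ t * ‖w‖ := by
  have h := norm_sub_le_of_norm_le (z := t + w) (S.differentiableOn_χ t ht) (S.norm_χ_le ht)
    (by simpa using hw)
  rwa [S.χ_eq ht, Complex.ofReal_re, add_sub_cancel_left] at h

lemma norm_φ_sub_le (S : InghamData φ χ δ t₀ C) (ht : t ∈ Ioo 0 t₀) {w : ℂ} (hw : ‖w‖ < δ t) :
    ‖φ (t + w) - (φ t).re + negDeriv φ t * w - secondDeriv φ t * w ^ 2 / 2‖ ≤
      2 * (C * secondDeriv φ t) / δ t * ‖w‖ ^ 3 := by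
  have h := norm_taylor_two_sub_le_of_norm_le (z := t + w) (S.differentiableOn_φ t ht)
    (S.norm_iteratedDeriv_le ht) (by simpa using hw)
  rwa [S.φ_eq ht, S.deriv_eq ht, S.iteratedDeriv_two_eq ht,
    add_sub_cancel_left, neg_mul, sub_neg_eq_add] at h

lemma deriv_χ_re_le (S : InghamData φ χ δ t₀ C) (ht : t ∈ Ioo 0 t₀) :
    (deriv χ t).re ≤ 2 * (C * (χ t).re) / δ t :=
  (Complex.re_le_norm _).trans <| Complex.norm_deriv_le_div_of_mapsTo_ball
    (S.differentiableOn_χ t ht) (mapsTo_closedBall_of_norm_le (S.norm_χ_le ht)) (S.δ_pos t ht)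

lemma nearRadius_pos (S : InghamData φ χ δ t₀ C) : 0 < nearRadius C :=
  one_div_pos.2 (mul_pos (by norm_num) (zero_lt_one.trans_le S.one_le))

lemma nearRadius_lt_one (S : InghamData φ χ δ t₀ C) : nearRadius C < 1 := by
  have := S.one_le
  rw [nearRadius, div_lt_one] <;> linarith

lemma norm_mul_I_lt_δ (S : InghamData φ χ δ t₀ C) (ht : t ∈ Ioo 0 t₀) {y : ℝ}
    (hy : |y| ≤ nearRadius C * δ t) : ‖(y * Complex.I : ℂ)‖ < δ t := by
  rw [norm_mul, Complex.norm_I, mul_one, Complex.norm_real, Real.norm_eq_abs]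
  exact hy.trans_lt (mul_lt_of_lt_one_left (S.δ_pos t ht) S.nearRadius_lt_one)

lemma abs_re_φ_sub_le (S : InghamData φ χ δ t₀ C) (ht : t ∈ Ioo 0 t₀) {y : ℝ}
    (hy : |y| ≤ nearRadius C * δ t) :
    |(φ (t + y * Complex.I)).re - (φ t).re + secondDeriv φ t * y ^ 2 / 2| ≤
      secondDeriv φ t * y ^ 2 / 4 := by
  have hC := S.one_le
  have hδ := S.δ_pos t ht
  have hq := S.secondDeriv_pos t ht
  have hre : (φ (t + y * Complex.I) - (φ t).re + negDeriv φ t * (y * Complex.I) -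
      secondDeriv φ t * (y * Complex.I) ^ 2 / 2).re =
      (φ (t + y * Complex.I)).re - (φ t).re + secondDeriv φ t * y ^ 2 / 2 := by
    have hsq : (secondDeriv φ t : ℂ) * (y * Complex.I) ^ 2 / 2 =
        ((-(secondDeriv φ t * y ^ 2 / 2) : ℝ) : ℂ) := by
      rw [mul_pow, Complex.I_sq]; push_cast; ring
    rw [hsq]
    simp [-Complex.ofReal_pow]
  rw [← hre]
  calc _ ≤ 2 * (C * secondDeriv φ t) / δ t * ‖(y * Complex.I : ℂ)‖ ^ 3 :=
        (Complex.abs_re_le_norm _).trans (S.norm_φ_sub_le ht (S.norm_mul_I_lt_δ ht hy))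
    _ = 2 * (C * secondDeriv φ t) / δ t * y ^ 2 * |y| := by
      rw [norm_mul, Complex.norm_I, mul_one, Complex.norm_real, Real.norm_eq_abs, ← sq_abs y]; ring
    _ ≤ 2 * (C * secondDeriv φ t) / δ t * y ^ 2 * (nearRadius C * δ t) := by gcongr
    _ = secondDeriv φ t * y ^ 2 / 4 := by rw [nearRadius]; field_simp; ring

lemma norm_χ_mem_Icc (S : InghamData φ χ δ t₀ C) (ht : t ∈ Ioo 0 t₀) {y : ℝ}
    (hy : |y| ≤ nearRadius C * δ t) :
    ‖χ (t + y * Complex.I)‖ ∈ Icc ((χ t).re / 2) (3 / 2 * (χ t).re) := by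
  have hC := S.one_le
  have hδ := S.δ_pos t ht
  have hχ := S.χ_re_pos t ht
  have hsub : ‖χ (t + y * Complex.I) - (χ t).re‖ ≤ (χ t).re / 4 :=
    calc _ ≤ 2 * (C * (χ t).re) / δ t * ‖(y * Complex.I : ℂ)‖ :=
          S.norm_χ_sub_le ht (S.norm_mul_I_lt_δ ht hy)
      _ = 2 * (C * (χ t).re) / δ t * |y| := by
        rw [norm_mul, Complex.norm_I, mul_one, Complex.norm_real, Real.norm_eq_abs]
      _ ≤ 2 * (C * (χ t).re) / δ t * (nearRadius C * δ t) := by gcongr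
      _ = (χ t).re / 4 := by rw [nearRadius]; field_simp; norm_num
  have habs := abs_le.1 ((abs_norm_sub_norm_le _ _).trans hsub)
  rw [Complex.norm_of_nonneg hχ.le] at habs
  constructor <;> linarith

end InghamData

lemma norm_mem_Icc_of_norm_div_sub_one_lt {a b : ℂ} (h : ‖a / b - 1‖ < 1 / 2) :
    ‖a‖ ∈ Icc (‖b‖ / 2) (3 / 2 * ‖b‖) := by
  have hb : b ≠ 0 := by
    rintro rfl
    norm_num at h
  have hsub : ‖a - b‖ ≤ ‖b‖ / 2 := by
    rw [div_sub_one hb, norm_div, div_lt_iff₀ (norm_pos_iff.2 hb)] at h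
    linarith
  have habs := abs_le.1 ((abs_norm_sub_norm_le a b).trans hsub)
  constructor <;> linarith

/-- The size `χ(t) exp φ(t)` of the Laplace transform at a point `t` of the real axis. -/
def amplitude (φ χ : ℂ → ℂ) (t : ℝ) : ℝ := (χ t).re * Real.exp (φ t).re

lemma InghamData.amplitude_pos {φ χ : ℂ → ℂ} {δ : ℝ → ℝ} {t₀ C t : ℝ}
    (S : InghamData φ χ δ t₀ C) (ht : t ∈ Ioo 0 t₀) : 0 < amplitude φ χ t :=
  mul_pos (S.χ_re_pos t ht) (Real.exp_pos _)

/-- A function `f` satisfying, together with `φ` and `χ`, the hypotheses of Ingham's theorem: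
`f` is asymptotic to `χ exp φ` on the discs of `InghamData`, and of order `χ(|z|) exp φ(|z|)` in
angles at the origin, here written with `z = t + i y`. -/
structure InghamTransform (f φ χ : ℂ → ℂ) (δ : ℝ → ℝ) (t₀ C : ℝ) : Prop
    extends InghamData φ χ δ t₀ C where
  tendsto_mul_negDeriv : Tendsto (fun t => t * negDeriv φ t) (𝓝[>] 0) atTop
  tendsto_δ_mul_negDeriv_div :
    Tendsto (fun t => δ t * negDeriv φ t / (t * √(secondDeriv φ t))) (𝓝[>] 0) atTop
  norm_div_sub_one_lt : ∀ ε : ℝ, 0 < ε → ∀ᶠ t : ℝ in 𝓝[>] 0, ∀ w : ℂ, ‖w‖ < δ t →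
    ‖f (t + w) / (χ (t + w) * Complex.exp (φ (t + w))) - 1‖ < ε
  exists_norm_le : ∀ K : ℝ, 0 < K → ∃ B : ℝ, 0 < B ∧ ∀ᶠ t : ℝ in 𝓝[>] 0, ∀ y : ℝ, |y| ≤ K * t →
    ‖f (t + y * Complex.I)‖ ≤ B * amplitude φ χ √(t ^ 2 + y ^ 2)

namespace InghamTransform

variable {f φ χ : ℂ → ℂ} {δ : ℝ → ℝ} {t₀ C : ℝ}

lemma eventually_norm_mem_Icc (S : InghamTransform f φ χ δ t₀ C) :
    ∀ᶠ t : ℝ in 𝓝[>] 0, ∀ y : ℝ, |y| ≤ nearRadius C * δ t →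
      ‖f (t + y * Complex.I)‖ ∈
        Icc (amplitude φ χ t / 4 * Real.exp (-(3 / 4 * (secondDeriv φ t * y ^ 2))))
          (9 / 4 * amplitude φ χ t * Real.exp (-(secondDeriv φ t * y ^ 2 / 4))) := by
  filter_upwards [S.norm_div_sub_one_lt (1 / 2) one_half_pos, Ioo_mem_nhdsGT S.t₀_pos]
    with t hf ht y hy
  obtain ⟨hlow, hupp⟩ := norm_mem_Icc_of_norm_div_sub_one_lt (hf _ (S.norm_mul_I_lt_δ ht hy))
  obtain ⟨hχlow, hχupp⟩ := S.norm_χ_mem_Icc ht hy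
  have hφ := abs_le.1 (S.abs_re_φ_sub_le ht hy)
  have hχ := S.χ_re_pos t ht
  rw [norm_mul, Complex.norm_exp] at hlow hupp
  constructor
  · calc amplitude φ χ t / 4 * Real.exp (-(3 / 4 * (secondDeriv φ t * y ^ 2)))
        = (χ t).re / 2 * Real.exp ((φ t).re - 3 / 4 * (secondDeriv φ t * y ^ 2)) / 2 := by
          rw [amplitude, sub_eq_add_neg, Real.exp_add]; ring
      _ ≤ ‖χ (t + y * Complex.I)‖ * Real.exp (φ (t + y * Complex.I)).re / 2 := by
          gcongr
          linarith
      _ ≤ _ := hlow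
  · calc ‖f (t + y * Complex.I)‖
        ≤ 3 / 2 * (‖χ (t + y * Complex.I)‖ * Real.exp (φ (t + y * Complex.I)).re) := hupp
      _ ≤ 3 / 2 * (3 / 2 * (χ t).re * Real.exp ((φ t).re + -(secondDeriv φ t * y ^ 2 / 4))) := by
          gcongr
          linarith
      _ = _ := by rw [amplitude, Real.exp_add]; ring

-- Compare the bounds for `‖f (t + i y)‖` from the asymptotics and in angles at `|y| ≍ δ t`.
lemma exists_eventually_exp_neg_le (S : InghamTransform f φ χ δ t₀ C) :
    ∃ c B : ℝ, 0 < c ∧ 0 < B ∧ ∀ᶠ t : ℝ in 𝓝[>] 0,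
      Real.exp (-(3 / 4 * (secondDeriv φ t * (nearRadius C * δ t) ^ 2))) ≤
        B * Real.exp (-(c * (δ t * negDeriv φ t / t * (nearRadius C * δ t)))) := by
  have hC := S.one_le
  obtain ⟨c, hc, hsub⟩ := S.exists_mul_le_sub S.nearRadius_pos one_pos
  obtain ⟨B, hB, hangle⟩ := S.exists_norm_le 1 one_pos
  refine ⟨c, 4 * B * C, hc, by positivity, ?_⟩
  filter_upwards [S.eventually_norm_mem_Icc, hangle, Ioo_mem_nhdsGT (half_pos S.t₀_pos)]
    with t hnear hangle ht
  have ht0 : t ∈ Ioo 0 t₀ := ⟨ht.1, by linarith [ht.1, ht.2]⟩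
  have hδ := S.δ_pos t ht0
  have hχ := S.χ_re_pos t ht0
  have hy : 0 < nearRadius C * δ t := mul_pos S.nearRadius_pos hδ
  have hyδ : nearRadius C * δ t < δ t := mul_lt_of_lt_one_left hδ S.nearRadius_lt_one
  have hδt : δ t ≤ t := S.δ_le t ht0
  set y := nearRadius C * δ t
  have hyt : |y| ≤ 1 * t := by rw [abs_of_pos hy]; linarith
  set r := √(t ^ 2 + y ^ 2)
  have htr : t < r := Real.lt_sqrt_of_sq_lt (lt_add_of_pos_right _ (by positivity))
  have hrt : r ≤ t + y :=
    Real.sqrt_le_iff.2 ⟨add_nonneg ht.1.le hy.le, by nlinarith [mul_pos ht.1 hy]⟩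
  have hχr : (χ r).re ≤ C * (χ t).re := S.χ_re_le ht0 (abs_lt.2 ⟨by linarith, by linarith⟩)
  have hφr := hsub t ht y (le_abs_self y) hyt (by linarith [ht.2])
  rw [abs_of_pos hy] at hφr
  refine le_of_mul_le_mul_left ?_ (div_pos (S.amplitude_pos ht0) four_pos)
  calc amplitude φ χ t / 4 * Real.exp (-(3 / 4 * (secondDeriv φ t * y ^ 2)))
      ≤ B * amplitude φ χ r := (hnear y (abs_of_pos hy).le).1.trans (hangle y hyt)
    _ ≤ B * (C * (χ t).re * Real.exp ((φ t).re + -(c * (δ t * negDeriv φ t / t * y)))) := by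
        unfold amplitude
        gcongr
        linarith
    _ = _ := by rw [amplitude, Real.exp_add]; ring

lemma exists_eventually_mul_le_add (S : InghamTransform f φ χ δ t₀ C) :
    ∃ c N : ℝ, 0 < c ∧ ∀ᶠ t : ℝ in 𝓝[>] 0,
      c * (δ t * negDeriv φ t / t * δ t) ≤ N + secondDeriv φ t * δ t ^ 2 := by
  obtain ⟨c, B, hc, hB, hexp⟩ := S.exists_eventually_exp_neg_le
  have hb := S.nearRadius_pos
  have hb1 := S.nearRadius_lt_one
  refine ⟨c * nearRadius C, Real.log B, by positivity, ?_⟩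
  filter_upwards [hexp, Ioo_mem_nhdsGT S.t₀_pos] with t hexp ht
  have hlog := Real.log_le_log (Real.exp_pos _) hexp
  rw [Real.log_mul hB.ne' (Real.exp_ne_zero _), Real.log_exp, Real.log_exp] at hlog
  have hle : secondDeriv φ t * (nearRadius C * δ t) ^ 2 ≤ secondDeriv φ t * δ t ^ 2 := by
    have := (S.secondDeriv_pos t ht).le
    have := (S.δ_pos t ht).le
    gcongr
    exact mul_le_of_le_one_left this hb1.le
  have := mul_nonneg (S.secondDeriv_pos t ht).le (sq_nonneg (nearRadius C * δ t))
  linarith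

lemma eventually_gap (S : InghamTransform f φ χ δ t₀ C) (M : ℝ) :
    ∀ᶠ t : ℝ in 𝓝[>] 0, 1 ≤ √(secondDeriv φ t) * δ t → M < √(secondDeriv φ t) * δ t := by
  obtain ⟨c, N, hc, hle⟩ := S.exists_eventually_mul_le_add
  filter_upwards [hle, Ioo_mem_nhdsGT S.t₀_pos,
    S.tendsto_δ_mul_negDeriv_div.eventually_gt_atTop ((N + M ^ 2) / c),
    S.tendsto_δ_mul_negDeriv_div.eventually_ge_atTop 0] with t hle ht hL hL0 hY
  by_contra! hYM
  have hσ : 0 < √(secondDeriv φ t) := Real.sqrt_pos.2 (S.secondDeriv_pos t ht)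
  rw [div_lt_iff₀' hc] at hL
  refine hL.not_ge ?_
  calc c * (δ t * negDeriv φ t / (t * √(secondDeriv φ t)))
      ≤ c * (δ t * negDeriv φ t / (t * √(secondDeriv φ t)) * (√(secondDeriv φ t) * δ t)) := by
        gcongr
        exact le_mul_of_one_le_right hL0 hY
    _ = c * (δ t * negDeriv φ t / t * δ t) := by field_simp
    _ ≤ N + secondDeriv φ t * δ t ^ 2 := hle
    _ = N + (√(secondDeriv φ t) * δ t) ^ 2 := by
        rw [mul_pow, Real.sq_sqrt (S.secondDeriv_pos t ht).le]
    _ ≤ N + M ^ 2 := by gcongr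

lemma frequently_one_le_sqrt_mul_δ (S : InghamTransform f φ χ δ t₀ C) :
    ∃ᶠ t in 𝓝[>] 0, 1 ≤ √(secondDeriv φ t) * δ t := by
  have hderiv : ∀ᶠ t in 𝓝[>] 0, HasDerivAt (fun t => t * negDeriv φ t)
      (1 * negDeriv φ t + t * -secondDeriv φ t) t := by
    filter_upwards [Ioo_mem_nhdsGT S.t₀_pos] with t ht
    exact (hasDerivAt_id' t).mul (S.hasDerivAt_negDeriv ht)
  refine ((frequently_hasDerivAt_nonpos_of_tendsto_atTop S.tendsto_mul_negDeriv
    hderiv).and_eventually ((S.tendsto_δ_mul_negDeriv_div.eventually_ge_atTop 1).and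
    (Ioo_mem_nhdsGT S.t₀_pos))).mono fun t ⟨hpq, hL, ht⟩ => hL.trans ?_
  have hq := S.secondDeriv_pos t ht
  have hδ := S.δ_pos t ht
  rw [div_le_iff₀ (mul_pos ht.1 (Real.sqrt_pos.2 hq))]
  calc δ t * negDeriv φ t ≤ δ t * (t * secondDeriv φ t) := by
        gcongr
        linarith [hpq]
    _ = δ t * (t * (√(secondDeriv φ t) * √(secondDeriv φ t))) := by
        rw [Real.mul_self_sqrt hq.le]
    _ = _ := by ring

lemma tendsto_sqrt_mul_δ (S : InghamTransform f φ χ δ t₀ C) :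
    Tendsto (fun t => √(secondDeriv φ t) * δ t) (𝓝[>] 0) atTop := by
  refine tendsto_atTop.2 fun M => ?_
  have hcont : ∀ᶠ t in 𝓝[>] 0, ContinuousAt (fun t => √(secondDeriv φ t) * δ t) t := by
    filter_upwards [Ioo_mem_nhdsGT S.t₀_pos] with t ht
    exact (S.continuousAt_secondDeriv ht).sqrt.mul (S.continuousAt_δ ht)
  filter_upwards [eventually_lt_of_gap (le_max_right M 1) hcont (S.eventually_gap _)
    S.frequently_one_le_sqrt_mul_δ] with t ht
  exact (le_max_left M 1).trans ht.le

lemma tendsto_negDeriv_mul_δ (S : InghamTransform f φ χ δ t₀ C) :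
    Tendsto (fun t => negDeriv φ t * δ t) (𝓝[>] 0) atTop := by
  refine tendsto_atTop_mono' _ ?_ S.tendsto_δ_mul_negDeriv_div
  filter_upwards [Ioo_mem_nhdsGT S.t₀_pos, S.tendsto_sqrt_mul_δ.eventually_ge_atTop 1] with t ht hY
  have hp := S.negDeriv_pos t ht
  have hδ := S.δ_pos t ht
  have hone : 1 ≤ t * √(secondDeriv φ t) := hY.trans <| by
    rw [mul_comm]
    exact mul_le_mul_of_nonneg_right (S.δ_le t ht) (Real.sqrt_nonneg _)
  rw [mul_comm (negDeriv φ t)]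
  exact div_le_self (by positivity) hone

lemma exists_antitoneOn_χ_mul_exp_half (S : InghamTransform f φ χ δ t₀ C) :
    ∃ t₁ ∈ Ioc 0 t₀, AntitoneOn (fun t : ℝ => (χ t).re * Real.exp ((φ t).re / 2)) (Ioo 0 t₁) := by
  obtain ⟨t₁, ht₁, hsub⟩ := (mem_nhdsGT_iff_exists_mem_Ioc_Ioo_subset S.t₀_pos).1
    (S.tendsto_negDeriv_mul_δ.eventually_ge_atTop (4 * C))
  have hmem {t : ℝ} (ht : t ∈ Ioo 0 t₁) : t ∈ Ioo 0 t₀ := ⟨ht.1, ht.2.trans_le ht₁.2⟩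
  refine ⟨t₁, ht₁, antitoneOn_Ioo_of_hasDerivAt_nonpos (fun t ht =>
    (S.hasDerivAt_re_χ (hmem ht)).mul ((S.hasDerivAt_re_φ (hmem ht)).div_const 2).exp)
    fun t ht => ?_⟩
  have hχ := S.χ_re_pos t (hmem ht)
  have hderiv : (deriv χ t).re ≤ (χ t).re * (negDeriv φ t / 2) := by
    refine (S.deriv_χ_re_le (hmem ht)).trans ((div_le_iff₀ (S.δ_pos t (hmem ht))).2 ?_)
    have : 4 * C ≤ negDeriv φ t * δ t := hsub ht
    nlinarith
  have := mul_le_mul_of_nonneg_right hderiv (Real.exp_pos ((φ t).re / 2)).le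
  linarith

lemma eventually_norm_le_near (S : InghamTransform f φ χ δ t₀ C) :
    ∀ᶠ t : ℝ in 𝓝[>] 0, ∀ y : ℝ, |y| ≤ nearRadius C * δ t → ‖f (t + y * Complex.I)‖ ≤
      9 / 4 * Real.exp 1 * amplitude φ χ t * Real.exp (-(√(secondDeriv φ t) * |y|)) := by
  filter_upwards [S.eventually_norm_mem_Icc, Ioo_mem_nhdsGT S.t₀_pos] with t hnear ht y hy
  have hamp := (S.amplitude_pos ht).le
  have hsq : secondDeriv φ t * y ^ 2 = (√(secondDeriv φ t) * |y|) ^ 2 := by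
    rw [mul_pow, Real.sq_sqrt (S.secondDeriv_pos t ht).le, sq_abs]
  calc ‖f (t + y * Complex.I)‖
      ≤ 9 / 4 * amplitude φ χ t * Real.exp (-(secondDeriv φ t * y ^ 2 / 4)) := (hnear y hy).2
    _ ≤ 9 / 4 * amplitude φ χ t * Real.exp (1 + -(√(secondDeriv φ t) * |y|)) := by
      gcongr
      rw [hsq]
      linarith [sq_nonneg (√(secondDeriv φ t) * |y| / 2 - 1)]
    _ = _ := by rw [Real.exp_add]; ring

lemma exists_eventually_norm_le_far (S : InghamTransform f φ χ δ t₀ C) {K : ℝ} (hK : 0 < K) :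
    ∃ B c : ℝ, 0 < c ∧ ∀ᶠ t : ℝ in 𝓝[>] 0, ∀ y : ℝ, nearRadius C * δ t ≤ |y| → |y| ≤ K * t →
      ‖f (t + y * Complex.I)‖ ≤
        B * amplitude φ χ t * Real.exp (-c * (√(secondDeriv φ t) * |y|)) := by
  obtain ⟨c, hc, hsub⟩ := S.exists_mul_le_sub S.nearRadius_pos hK
  obtain ⟨B, hB, hangle⟩ := S.exists_norm_le K hK
  obtain ⟨t₁, ht₁, hanti⟩ := S.exists_antitoneOn_χ_mul_exp_half
  refine ⟨B, c / 2, half_pos hc, ?_⟩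
  filter_upwards [hangle, Ioo_mem_nhdsGT (half_pos S.t₀_pos),
    Ioo_mem_nhdsGT (show 0 < t₁ / (1 + K) from div_pos ht₁.1 (by positivity)),
    S.tendsto_δ_mul_negDeriv_div.eventually_ge_atTop 1] with t hangle ht ht' hL y hy hyK
  have htpos := ht.1
  have hσ : 0 < √(secondDeriv φ t) :=
    Real.sqrt_pos.2 (S.secondDeriv_pos t ⟨ht.1, by linarith [ht.2]⟩)
  set r := √(t ^ 2 + y ^ 2)
  have htr : t ≤ r := Real.le_sqrt_of_sq_le (le_add_of_nonneg_right (sq_nonneg y))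
  have hr : r < t₁ := by
    refine lt_of_le_of_lt (Real.sqrt_le_iff.2 ⟨by positivity, ?_⟩ : r ≤ (1 + K) * t) ?_
    · rw [← sq_abs y]
      nlinarith [abs_nonneg y]
    · rw [mul_comm, ← lt_div_iff₀ (by positivity)]
      exact ht'.2
  have hφ : c * (√(secondDeriv φ t) * |y|) ≤ (φ t).re - (φ r).re := by
    refine le_trans ?_ (hsub t ht y hy hyK (hr.trans_le ht₁.2))
    rw [one_le_div (by positivity)] at hL
    have : √(secondDeriv φ t) ≤ δ t * negDeriv φ t / t := by
      rwa [le_div_iff₀ htpos, mul_comm]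
    gcongr
  calc ‖f (t + y * Complex.I)‖ ≤ B * amplitude φ χ r := hangle y hyK
    _ = B * ((χ r).re * Real.exp ((φ r).re / 2)) * Real.exp ((φ r).re / 2) := by
      rw [amplitude, mul_assoc B, mul_assoc, ← Real.exp_add, add_halves]
    _ ≤ B * ((χ t).re * Real.exp ((φ t).re / 2)) *
        Real.exp ((φ t).re / 2 + -(c / 2) * (√(secondDeriv φ t) * |y|)) := by
      have := hanti ⟨htpos, htr.trans_lt hr⟩ ⟨htpos.trans_le htr, hr⟩ htr
      have := (S.χ_re_pos t ⟨ht.1, by linarith [ht.2]⟩).le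
      gcongr
      linarith
    _ = B * amplitude φ χ t * Real.exp (-(c / 2) * (√(secondDeriv φ t) * |y|)) := by
      rw [amplitude, Real.exp_add, ← add_halves (φ t).re, Real.exp_add, add_halves]; ring

lemma exists_eventually_norm_le_mul_exp (S : InghamTransform f φ χ δ t₀ C) {K : ℝ} (hK : 0 < K) :
    ∃ B c : ℝ, 0 < c ∧ ∀ᶠ t : ℝ in 𝓝[>] 0, ∀ y : ℝ, |y| ≤ K * t → ‖f (t + y * Complex.I)‖ ≤
      B * amplitude φ χ t * Real.exp (-c * (√(secondDeriv φ t) * |y|)) := by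
  obtain ⟨B, c, hc, hfar⟩ := S.exists_eventually_norm_le_far hK
  refine ⟨max (9 / 4 * Real.exp 1) B, min 1 c, lt_min one_pos hc, ?_⟩
  filter_upwards [S.eventually_norm_le_near, hfar, Ioo_mem_nhdsGT S.t₀_pos]
    with t hnear hfar ht y hy
  have hamp := (S.amplitude_pos ht).le
  rcases le_total |y| (nearRadius C * δ t) with hyδ | hyδ
  · refine (hnear y hyδ).trans ?_
    rw [← neg_one_mul]
    gcongr
    exacts [le_max_left _ _, min_le_left _ _]
  · refine (hfar y hyδ hy).trans ?_
    gcongr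
    exacts [le_max_right _ _, min_le_right _ _]

end InghamTransform

/-- The point `i s / √φ''(t)`: at this scale the transform near a saddle point `t` looks Gaussian
in `s`. -/
def verticalShift (φ : ℂ → ℂ) (s t : ℝ) : ℂ := (s / √(secondDeriv φ t) : ℝ) * Complex.I

lemma norm_verticalShift (φ : ℂ → ℂ) (s t : ℝ) :
    ‖verticalShift φ s t‖ = |s| / √(secondDeriv φ t) := by
  rw [verticalShift, norm_mul, Complex.norm_I, mul_one, Complex.norm_real, Real.norm_eq_abs,
    abs_div, abs_of_nonneg (Real.sqrt_nonneg _)]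

namespace InghamTransform

variable {f φ χ : ℂ → ℂ} {δ : ℝ → ℝ} {t₀ C : ℝ}

lemma eventually_norm_verticalShift_lt (S : InghamTransform f φ χ δ t₀ C) (s : ℝ) :
    ∀ᶠ t in 𝓝[>] 0, ‖verticalShift φ s t‖ < δ t := by
  filter_upwards [S.tendsto_sqrt_mul_δ.eventually_gt_atTop |s|, Ioo_mem_nhdsGT S.t₀_pos]
    with t hs ht
  rwa [norm_verticalShift, div_lt_iff₀ (Real.sqrt_pos.2 (S.secondDeriv_pos t ht)), mul_comm]

lemma tendsto_div_add_verticalShift (S : InghamTransform f φ χ δ t₀ C) (s : ℝ) :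
    Tendsto (fun t : ℝ => f (t + verticalShift φ s t) /
      (χ (t + verticalShift φ s t) * Complex.exp (φ (t + verticalShift φ s t))))
      (𝓝[>] 0) (𝓝 1) := by
  refine Metric.tendsto_nhds.2 fun ε hε => ?_
  filter_upwards [S.eventually_norm_verticalShift_lt s, S.norm_div_sub_one_lt ε hε] with t hw hf
  rw [dist_eq_norm]
  exact hf _ hw

lemma tendsto_χ_add_verticalShift_div (S : InghamTransform f φ χ δ t₀ C) (s : ℝ) :
    Tendsto (fun t : ℝ => χ (t + verticalShift φ s t) / (χ t).re) (𝓝[>] 0) (𝓝 1) := by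
  rw [tendsto_iff_norm_sub_tendsto_zero]
  refine squeeze_zero' (Eventually.of_forall fun _ => norm_nonneg _) ?_
    (S.tendsto_sqrt_mul_δ.const_div_atTop (2 * C * |s|))
  filter_upwards [S.eventually_norm_verticalShift_lt s, Ioo_mem_nhdsGT S.t₀_pos] with t hw ht
  have hχ := S.χ_re_pos t ht
  have hδ := S.δ_pos t ht
  have hσ := Real.sqrt_pos.2 (S.secondDeriv_pos t ht)
  rw [div_sub_one (Complex.ofReal_ne_zero.2 hχ.ne'), norm_div, Complex.norm_of_nonneg hχ.le,
    div_le_iff₀ hχ]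
  refine (S.norm_χ_sub_le ht hw).trans_eq ?_
  rw [norm_verticalShift]
  field_simp

lemma tendsto_φ_add_verticalShift_sub (S : InghamTransform f φ χ δ t₀ C) (s : ℝ) :
    Tendsto (fun t : ℝ => φ (t + verticalShift φ s t) - (φ t).re +
      negDeriv φ t * verticalShift φ s t) (𝓝[>] 0) (𝓝 ((-(1 / 2) * s ^ 2 : ℝ) : ℂ)) := by
  rw [tendsto_iff_norm_sub_tendsto_zero]
  refine squeeze_zero' (Eventually.of_forall fun _ => norm_nonneg _) ?_
    (S.tendsto_sqrt_mul_δ.const_div_atTop (2 * C * |s| ^ 3))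
  filter_upwards [S.eventually_norm_verticalShift_lt s, Ioo_mem_nhdsGT S.t₀_pos] with t hw ht
  have hδ := S.δ_pos t ht
  have hq := S.secondDeriv_pos t ht
  have hquad : secondDeriv φ t * verticalShift φ s t ^ 2 / 2 = ((-(1 / 2) * s ^ 2 : ℝ) : ℂ) := by
    have : (secondDeriv φ t : ℂ) ≠ 0 := Complex.ofReal_ne_zero.2 hq.ne'
    rw [verticalShift, mul_pow, Complex.I_sq, ← Complex.ofReal_pow, div_pow, Real.sq_sqrt hq.le]
    push_cast
    field_simp
  rw [← hquad]
  refine (S.norm_φ_sub_le ht hw).trans_eq ?_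
  rw [norm_verticalShift, div_pow, pow_succ √(secondDeriv φ t), Real.sq_sqrt hq.le]
  have := Real.sqrt_pos.2 hq
  field_simp

lemma tendsto_div_amplitude_mul_exp (S : InghamTransform f φ χ δ t₀ C) (s : ℝ) :
    Tendsto (fun t : ℝ => f (t + verticalShift φ s t) / amplitude φ χ t *
      Complex.exp (negDeriv φ t * verticalShift φ s t)) (𝓝[>] 0)
      (𝓝 (Real.exp (-(1 / 2) * s ^ 2) : ℝ)) := by
  have hlim := ((S.tendsto_div_add_verticalShift s).mul (S.tendsto_χ_add_verticalShift_div s)).mul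
    (S.tendsto_φ_add_verticalShift_sub s).cexp
  rw [one_mul, one_mul, ← Complex.ofReal_exp] at hlim
  refine hlim.congr' ?_
  filter_upwards [S.eventually_norm_verticalShift_lt s, S.norm_div_sub_one_lt 1 one_pos,
    Ioo_mem_nhdsGT S.t₀_pos] with t hw hf ht
  have hχ : χ (t + verticalShift φ s t) ≠ 0 := fun hzero => by
    simpa [hzero] using hf _ hw
  have hχt : ((χ t).re : ℂ) ≠ 0 := Complex.ofReal_ne_zero.2 (S.χ_re_pos t ht).ne'
  have := Complex.exp_ne_zero (φ (t + verticalShift φ s t))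
  have := Complex.exp_ne_zero (φ t).re
  rw [Complex.exp_add, Complex.exp_sub, amplitude, Complex.ofReal_mul, Complex.ofReal_exp]
  field_simp

end InghamTransform

/-- The image under `u ↦ t * (u - x)` of the measure with density `c * exp (-t * u)`
with respect to `μ`. -/
def expTilt (μ : Measure ℝ) (c t x : ℝ) : Measure ℝ :=
  (μ.withDensity fun u => ENNReal.ofReal (c * Real.exp (-t * u))).map fun u => t * (u - x)

section expTilt

variable {μ : Measure ℝ} {c t x : ℝ}

lemma isFiniteMeasure_expTilt (h : Integrable (fun u => Real.exp (-t * u)) μ) :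
    IsFiniteMeasure (expTilt μ c t x) := by
  have := isFiniteMeasure_withDensity_ofReal (h.const_mul c).2
  exact Measure.isFiniteMeasure_map _ _

lemma setIntegral_expTilt {E : Type*} [NormedAddCommGroup E] [NormedSpace ℝ E] (hc : 0 ≤ c)
    {g : ℝ → E} (hg : StronglyMeasurable g) {s : Set ℝ} (hs : MeasurableSet s) :
    ∫ v in s, g v ∂(expTilt μ c t x) =
      ∫ u in (fun u => t * (u - x)) ⁻¹' s, (c * Real.exp (-t * u)) • g (t * (u - x)) ∂μ := by
  have hmeas : Measurable fun u : ℝ => t * (u - x) := by fun_prop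
  rw [expTilt, setIntegral_map hs hg.aestronglyMeasurable hmeas.aemeasurable,
    setIntegral_withDensity_eq_setIntegral_toReal_smul (by fun_prop)
      (Eventually.of_forall fun _ => ENNReal.ofReal_lt_top) _ (hmeas hs)]
  refine setIntegral_congr_fun (hmeas hs) fun u _ => ?_
  rw [ENNReal.toReal_ofReal (by positivity)]

lemma setIntegral_exp_expTilt (hc : 0 ≤ c) {s : Set ℝ} (hs : MeasurableSet s) :
    ∫ v in s, Real.exp v ∂(expTilt μ c t x) =
      c * Real.exp (-t * x) * μ.real ((fun u => t * (u - x)) ⁻¹' s) := by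
  have hconst (u : ℝ) : (c * Real.exp (-t * u)) • Real.exp (t * (u - x)) =
      c * Real.exp (-t * x) := by
    rw [smul_eq_mul, mul_assoc, ← Real.exp_add]
    ring_nf
  simp_rw [setIntegral_expTilt hc Real.continuous_exp.stronglyMeasurable hs, hconst]
  rw [setIntegral_const, smul_eq_mul, mul_comm]

lemma setIntegral_Iio_exp_expTilt (hc : 0 ≤ c) (ht : 0 < t) :
    ∫ v in Iio 0, Real.exp v ∂(expTilt μ c t x) = c * Real.exp (-t * x) * μ.real (Iio x) := by
  rw [setIntegral_exp_expTilt hc measurableSet_Iio]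
  congr 2
  ext u
  simp [mul_neg_iff, ht, ht.le]

lemma setIntegral_Iic_exp_expTilt (hc : 0 ≤ c) (ht : 0 < t) :
    ∫ v in Iic 0, Real.exp v ∂(expTilt μ c t x) = c * Real.exp (-t * x) * μ.real (Iic x) := by
  rw [setIntegral_exp_expTilt hc measurableSet_Iic]
  congr 2
  ext u
  simp [mul_nonpos_iff, ht.le, ht.not_ge]

lemma charFun_expTilt (hc : 0 ≤ c) (η : ℝ) :
    charFun (expTilt μ c t x) η = c * Complex.exp (-(η * t * x) * Complex.I) *
      ∫ u : ℝ, Complex.exp (-(t + (-(η * t) : ℝ) * Complex.I) * u) ∂μ := by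
  rw [charFun_apply_real, ← setIntegral_univ,
    setIntegral_expTilt hc (Continuous.stronglyMeasurable (by fun_prop)) MeasurableSet.univ,
    preimage_univ, setIntegral_univ, ← integral_const_mul]
  congr 1 with u
  rw [Complex.real_smul, Complex.ofReal_mul, Complex.ofReal_exp, mul_assoc (c : ℂ),
    mul_assoc (c : ℂ), ← Complex.exp_add, ← Complex.exp_add]
  congr 2
  push_cast
  ring

end expTilt

lemma integrable_exp_neg_mul_abs {c : ℝ} (hc : 0 < c) :
    Integrable fun s : ℝ => Real.exp (-c * |s|) := by
  rw [← integrableOn_univ, ← Iic_union_Ioi (a := (0 : ℝ))]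
  refine ((integrableOn_exp_mul_Iic hc 0).congr_fun (fun s hs => ?_) measurableSet_Iic).union
    ((integrableOn_exp_mul_Ioi (neg_lt_zero.2 hc) 0).congr_fun (fun s hs => ?_) measurableSet_Ioi)
  · rw [abs_of_nonpos hs, neg_mul_neg]
  · rw [abs_of_pos hs]

/-- `f` is the two-sided Laplace transform of `μ`, which converges in the right half-plane. -/
structure IsLaplaceTransform (f : ℂ → ℂ) (μ : Measure ℝ) : Prop where
  integrable : ∀ z : ℂ, 0 < z.re → Integrable (fun u : ℝ => Complex.exp (-z * u)) μ
  eq_integral : ∀ z : ℂ, 0 < z.re → f z = ∫ u : ℝ, Complex.exp (-z * u) ∂μ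

/-- The factor by which `saddleTilt` is normalised so that its limit is Lebesgue measure. -/
def tiltConst (φ χ : ℂ → ℂ) (t : ℝ) : ℝ :=
  √(2 * Real.pi) * (√(secondDeriv φ t) * t) / amplitude φ χ t

/-- The measure `μ` tilted by `exp (-t u)` and seen from the point `x = -φ'(t)`, for which `t` is
the saddle point of `φ(z) + x z`. -/
def saddleTilt (μ : Measure ℝ) (φ χ : ℂ → ℂ) (t : ℝ) : Measure ℝ :=
  expTilt μ (tiltConst φ χ t) t (negDeriv φ t)

section SaddleTilt

variable {f φ χ : ℂ → ℂ} {δ : ℝ → ℝ} {t₀ C t : ℝ} {μ : Measure ℝ}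

lemma IsLaplaceTransform.isFiniteMeasure_saddleTilt (hf : IsLaplaceTransform f μ) (ht : 0 < t) :
    IsFiniteMeasure (saddleTilt μ φ χ t) :=
  isFiniteMeasure_expTilt <| (hf.integrable t (by simpa using ht)).norm.congr <|
    Eventually.of_forall fun u => by simp [Complex.norm_exp]

lemma InghamData.tiltConst_nonneg (S : InghamData φ χ δ t₀ C) (ht : t ∈ Ioo 0 t₀) :
    0 ≤ tiltConst φ χ t := by
  have := S.amplitude_pos ht
  have := ht.1
  unfold tiltConst
  positivity

lemma InghamData.charFun_saddleTilt (S : InghamData φ χ δ t₀ C) (hf : IsLaplaceTransform f μ)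
    (ht : t ∈ Ioo 0 t₀) (s : ℝ) :
    charFun (saddleTilt μ φ χ t) (s / (√(secondDeriv φ t) * t)) / (√(secondDeriv φ t) * t : ℝ) =
      √(2 * Real.pi) * (f (t + verticalShift φ (-s) t) / amplitude φ χ t *
        Complex.exp (negDeriv φ t * verticalShift φ (-s) t)) := by
  have htpos := ht.1
  have hσ := Real.sqrt_pos.2 (S.secondDeriv_pos t ht)
  have hfreq : s / (√(secondDeriv φ t) * t) * t = s / √(secondDeriv φ t) := by field_simp
  have hshift : ((-(s / √(secondDeriv φ t)) : ℝ) : ℂ) * Complex.I = verticalShift φ (-s) t := by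
    rw [verticalShift, neg_div]
  have hphase : -((s / (√(secondDeriv φ t) * t) : ℝ) * t * negDeriv φ t : ℂ) * Complex.I =
      negDeriv φ t * verticalShift φ (-s) t := by
    rw [← Complex.ofReal_mul, hfreq, ← hshift]
    push_cast
    ring
  have hconst : (tiltConst φ χ t : ℂ) / (√(secondDeriv φ t) * t : ℝ) =
      √(2 * Real.pi) / amplitude φ χ t := by
    rw [tiltConst, ← Complex.ofReal_div, div_right_comm,
      mul_div_cancel_right₀ _ (mul_pos hσ htpos).ne', Complex.ofReal_div]
  have hre : 0 < (t + verticalShift φ (-s) t).re := by simpa [verticalShift] using htpos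
  rw [saddleTilt, charFun_expTilt (S.tiltConst_nonneg ht), hfreq, hphase, hshift,
    ← hf.eq_integral _ hre, mul_assoc, mul_div_right_comm, hconst]
  ring

lemma InghamData.norm_charFun_saddleTilt_div (S : InghamData φ χ δ t₀ C)
    (hf : IsLaplaceTransform f μ) (ht : t ∈ Ioo 0 t₀) (s : ℝ) :
    ‖charFun (saddleTilt μ φ χ t) (s / (√(secondDeriv φ t) * t)) /
        (√(secondDeriv φ t) * t : ℝ)‖ =
      √(2 * Real.pi) * (‖f (t + verticalShift φ (-s) t)‖ / amplitude φ χ t) := by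
  have hphase : ‖Complex.exp (negDeriv φ t * verticalShift φ (-s) t)‖ = 1 := by
    rw [verticalShift, ← mul_assoc, ← Complex.ofReal_mul, Complex.norm_exp_ofReal_mul_I]
  rw [S.charFun_saddleTilt hf ht, norm_mul, norm_mul, hphase, mul_one, norm_div,
    Complex.norm_of_nonneg (Real.sqrt_nonneg _), Complex.norm_of_nonneg (S.amplitude_pos ht).le]

variable {u : ℕ → ℝ}

lemma InghamTransform.hasGaussianCharFunLimit_saddleTilt (S : InghamTransform f φ χ δ t₀ C)
    (hf : IsLaplaceTransform f μ) (hu : Tendsto u atTop (𝓝[>] 0)) (hmem : ∀ n, u n ∈ Ioo 0 t₀) :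
    HasGaussianCharFunLimit (fun n => saddleTilt μ φ χ (u n))
      (fun n => √(secondDeriv φ (u n)) * u n) where
  tendsto_atTop := tendsto_atTop_mono
    (fun n => mul_le_mul_of_nonneg_left (S.δ_le _ (hmem n)) (Real.sqrt_nonneg _))
    (S.tendsto_sqrt_mul_δ.comp hu)
  tendsto_charFun s := by
    have hlim := ((S.tendsto_div_amplitude_mul_exp (-s)).comp hu).const_mul (√(2 * Real.pi) : ℂ)
    rw [neg_sq, ← Complex.ofReal_mul] at hlim
    exact hlim.congr fun n => (S.charFun_saddleTilt hf (hmem n) s).symm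
  exists_dominating K := by
    have hK : 0 < max K 1 := lt_max_of_lt_right one_pos
    obtain ⟨B, c, hc, hB⟩ := S.exists_eventually_norm_le_mul_exp hK
    refine ⟨fun s => √(2 * Real.pi) * (B * Real.exp (-c * |s|)),
      ((integrable_exp_neg_mul_abs hc).const_mul B).const_mul _, ?_⟩
    filter_upwards [hu.eventually hB] with n hn s hs
    have hσ := Real.sqrt_pos.2 (S.secondDeriv_pos _ (hmem n))
    have habs : |(-s) / √(secondDeriv φ (u n))| = |s| / √(secondDeriv φ (u n)) := by
      rw [abs_div, abs_neg, abs_of_pos hσ]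
    have hfs : ‖f (u n + verticalShift φ (-s) (u n))‖ ≤
        B * amplitude φ χ (u n) * Real.exp (-c * |s|) := by
      have := hn (-s / √(secondDeriv φ (u n))) ?_
      · rwa [habs, mul_div_cancel₀ _ hσ.ne'] at this
      · rw [habs, div_le_iff₀ hσ]
        refine hs.trans ?_
        rw [mul_comm √(secondDeriv φ (u n)), ← mul_assoc]
        have := (hmem n).1
        gcongr
        exact le_max_left _ _
    rw [S.norm_charFun_saddleTilt_div hf (hmem n)]
    gcongr
    rw [div_le_iff₀ (S.amplitude_pos (hmem n))]
    linarith

lemma InghamTransform.tendsto_negDeriv (S : InghamTransform f φ χ δ t₀ C) :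
    Tendsto (negDeriv φ) (𝓝[>] 0) atTop := by
  refine tendsto_atTop_mono' _ ?_ S.tendsto_mul_negDeriv
  filter_upwards [Ioo_mem_nhdsGT S.t₀_pos, Ioo_mem_nhdsGT one_pos] with t ht ht1
  exact mul_le_of_le_one_left (S.negDeriv_pos t ht).le ht1.2.le

lemma InghamTransform.tendsto_tiltConst_mul (S : InghamTransform f φ χ δ t₀ C)
    (hf : IsLaplaceTransform f μ) {a : ℝ → ℝ}
    (ha : ∀ᶠ x in atTop, μ.real (Iio x) ≤ a x ∧ a x ≤ μ.real (Iic x)) :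
    Tendsto (fun t => tiltConst φ χ t * Real.exp (-t * negDeriv φ t) * a (negDeriv φ t))
      (𝓝[>] 0) (𝓝 1) := by
  refine tendsto_of_seq_tendsto fun u hu => ?_
  obtain ⟨N, hN⟩ := eventually_atTop.1 (hu.eventually (Ioo_mem_nhdsGT S.t₀_pos))
  rw [← tendsto_add_atTop_iff_nat N, ← Real.exp_zero]
  have hmem (n : ℕ) : u (n + N) ∈ Ioo 0 t₀ := hN _ (Nat.le_add_left _ _)
  have htail : Tendsto (fun n => u (n + N)) atTop (𝓝[>] 0) := (tendsto_add_atTop_iff_nat N).2 hu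
  have hfin (n : ℕ) : IsFiniteMeasure (saddleTilt μ φ χ (u (n + N))) :=
    hf.isFiniteMeasure_saddleTilt (hmem n).1
  have hfactor (n : ℕ) := mul_nonneg (S.tiltConst_nonneg (hmem n))
    (Real.exp_pos (-u (n + N) * negDeriv φ (u (n + N)))).le
  refine (S.hasGaussianCharFunLimit_saddleTilt hf htail hmem).tendsto_of_setIntegral_exp ?_ ?_
  all_goals filter_upwards [htail.eventually (S.tendsto_negDeriv.eventually ha)] with n hn
  · rw [saddleTilt, setIntegral_Iio_exp_expTilt (S.tiltConst_nonneg (hmem n)) (hmem n).1]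
    exact mul_le_mul_of_nonneg_left hn.1 (hfactor n)
  · rw [saddleTilt, setIntegral_Iic_exp_expTilt (S.tiltConst_nonneg (hmem n)) (hmem n).1]
    exact mul_le_mul_of_nonneg_left hn.2 (hfactor n)

lemma InghamTransform.tendsto_div_saddlePoint (S : InghamTransform f φ χ δ t₀ C)
    (hf : IsLaplaceTransform f μ) {a : ℝ → ℝ}
    (ha : ∀ᶠ x in atTop, μ.real (Iio x) ≤ a x ∧ a x ≤ μ.real (Iic x)) :
    Tendsto (fun t => a (negDeriv φ t) / ((χ t).re * Real.exp ((φ t).re + negDeriv φ t * t) /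
      (t * √(2 * Real.pi * secondDeriv φ t)))) (𝓝[>] 0) (𝓝 1) := by
  refine (S.tendsto_tiltConst_mul hf ha).congr' ?_
  filter_upwards [Ioo_mem_nhdsGT S.t₀_pos] with t ht
  have hχ := S.χ_re_pos t ht
  have hσ := Real.sqrt_pos.2 (S.secondDeriv_pos t ht)
  have htpos := ht.1
  rw [tiltConst, amplitude, Real.sqrt_mul Real.two_pi_pos.le, Real.exp_add, neg_mul, Real.exp_neg,
    mul_comm (negDeriv φ t) t]
  field_simp

end SaddleTilt

lemma zero_notMem_of_tendsto_mul_negDeriv {D : Set ℂ} (hD : IsOpen D) {φ : ℂ → ℂ}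
    (hφ : DifferentiableOn ℂ φ D)
    (hb : Tendsto (fun t => t * negDeriv φ t) (𝓝[>] 0) atTop) : (0 : ℂ) ∉ D := by
  intro h0
  have hderiv : ContinuousAt (deriv φ) ((0 : ℝ) : ℂ) :=
    ((hφ.deriv hD).differentiableAt (hD.mem_nhds (by simpa using h0))).continuousAt
  have hcont : ContinuousAt (fun t : ℝ => t * negDeriv φ t) 0 :=
    continuousAt_id.mul (Complex.continuous_re.continuousAt.comp
      (hderiv.comp Complex.continuous_ofReal.continuousAt)).neg
  exact not_tendsto_nhds_of_tendsto_atTop hb _ (hcont.tendsto.mono_left nhdsWithin_le_nhds)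

lemma ball_infDist_compl_subset {α : Type*} [PseudoMetricSpace α] (x : α) (s : Set α) :
    Metric.ball x (Metric.infDist x sᶜ) ⊆ s :=
  disjoint_compl_right_iff_subset.1 Metric.disjoint_ball_infDist

lemma eventually_negDeriv_pos {φ : ℂ → ℂ}
    (hb : Tendsto (fun t => t * negDeriv φ t) (𝓝[>] 0) atTop) :
    ∀ᶠ t in 𝓝[>] 0, 0 < negDeriv φ t := by
  filter_upwards [hb.eventually_gt_atTop 0, self_mem_nhdsWithin] with t hpos ht
  exact pos_of_mul_pos_right hpos (le_of_lt ht)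

-- Where `φ'' ≤ 0` the square root, hence the quotient, takes the junk value `0`.
lemma eventually_secondDeriv_pos {φ : ℂ → ℂ} {δ : ℝ → ℝ}
    (hc : Tendsto (fun t => δ t * negDeriv φ t / (t * √(secondDeriv φ t))) (𝓝[>] 0) atTop) :
    ∀ᶠ t in 𝓝[>] 0, 0 < secondDeriv φ t := by
  filter_upwards [hc.eventually_gt_atTop 0] with t ht
  by_contra! hle
  simp [Real.sqrt_eq_zero_of_nonpos hle] at ht

section Domain

variable {D : Set ℂ} {φ χ f : ℂ → ℂ} {δ : ℝ → ℝ} {h t₀ C : ℝ}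

lemma InghamData.of_isOpen (hDopen : IsOpen D) (h0 : (0 : ℂ) ∉ D) (ht₀ : 0 < t₀)
    (hD : ∀ t ∈ Ioo 0 t₀, (t : ℂ) ∈ D) (hδ : ∀ t ∈ Ioo 0 t₀, δ t = Metric.infDist (t : ℂ) Dᶜ)
    (hφ : DifferentiableOn ℂ φ D) (hχ : DifferentiableOn ℂ χ D)
    (hφim : ∀ t ∈ Ioo 0 t₀, (φ t).im = 0)
    (hχpos : ∀ t ∈ Ioo 0 t₀, (χ t).im = 0 ∧ 0 < (χ t).re)
    (hderiv : ∀ t ∈ Ioo 0 t₀, 0 < negDeriv φ t ∧ 0 < secondDeriv φ t)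
    (hC : ∀ t ∈ Ioo 0 t₀, ∀ w : ℂ, ‖w‖ < δ t →
      ‖iteratedDeriv 2 φ (t + w)‖ ≤ C * ‖iteratedDeriv 2 φ t‖ ∧ ‖χ (t + w)‖ ≤ C * ‖χ t‖) :
    InghamData φ χ δ t₀ (max C 1) := by
  have hball (t) (ht : t ∈ Ioo 0 t₀) : Metric.ball (t : ℂ) (δ t) ⊆ D :=
    hδ t ht ▸ ball_infDist_compl_subset _ _
  exact
  { t₀_pos := ht₀
    one_le := le_max_right _ _
    δ_pos := fun t ht => hδ t ht ▸ (hDopen.isClosed_compl.notMem_iff_infDist_pos ⟨0, h0⟩).1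
      (not_not.2 (hD t ht))
    δ_le := fun t ht => by
      rw [hδ t ht]
      refine (Metric.infDist_le_dist_of_mem (mem_compl h0)).trans_eq ?_
      rw [dist_zero_right, Complex.norm_of_nonneg ht.1.le]
    lipschitzOn_δ := LipschitzOnWith.of_le_add fun s hs t ht => by
      rw [hδ s hs, hδ t ht, ← Complex.isometry_ofReal.dist_eq]
      exact Metric.infDist_le_infDist_add_dist
    differentiableOn_φ := fun t ht => hφ.mono (hball t ht)
    differentiableOn_χ := fun t ht => hχ.mono (hball t ht)
    φ_im := hφim
    χ_im := fun t ht => (hχpos t ht).1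
    χ_re_pos := fun t ht => (hχpos t ht).2
    negDeriv_pos := fun t ht => (hderiv t ht).1
    secondDeriv_pos := fun t ht => (hderiv t ht).2
    norm_iteratedDeriv_add_le := fun t ht w hw =>
      (hC t ht w hw).1.trans (mul_le_mul_of_nonneg_right (le_max_left _ _) (norm_nonneg _))
    norm_χ_add_le := fun t ht w hw =>
      (hC t ht w hw).2.trans (mul_le_mul_of_nonneg_right (le_max_left _ _) (norm_nonneg _)) }

lemma exists_inghamData (hDopen : IsOpen D) (hh : 0 < h)
    (hD : ∀ t : ℝ, 0 < t → t ≤ h → (t : ℂ) ∈ D)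
    (hδ : ∀ t : ℝ, 0 < t → t ≤ h → δ t = Metric.infDist (t : ℂ) Dᶜ)
    (hφ : DifferentiableOn ℂ φ D) (hχ : DifferentiableOn ℂ χ D)
    (hφim : ∀ t : ℝ, 0 < t → t ≤ h → (φ t).im = 0)
    (hχpos : ∀ t : ℝ, 0 < t → t ≤ h → (χ t).im = 0 ∧ 0 < (χ t).re)
    (hb : Tendsto (fun t => t * negDeriv φ t) (𝓝[>] 0) atTop)
    (hc : Tendsto (fun t => δ t * negDeriv φ t / (t * √(secondDeriv φ t))) (𝓝[>] 0) atTop)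
    (hd : ∃ C t₀ : ℝ, 0 < t₀ ∧ ∀ t : ℝ, 0 < t → t ≤ t₀ → ∀ w : ℂ, ‖w‖ < δ t →
      ‖iteratedDeriv 2 φ (t + w)‖ ≤ C * ‖iteratedDeriv 2 φ t‖ ∧ ‖χ (t + w)‖ ≤ C * ‖χ t‖) :
    ∃ t₀ C : ℝ, t₀ ≤ h ∧ InghamData φ χ δ t₀ C := by
  obtain ⟨C, t₁, ht₁, hC⟩ := hd
  obtain ⟨t₀, ⟨ht₀, ht₀h⟩, hsub⟩ := (mem_nhdsGT_iff_exists_mem_Ioc_Ioo_subset hh).1 <|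
    ((eventually_negDeriv_pos hb).and (eventually_secondDeriv_pos hc)).and (Ioo_mem_nhdsGT ht₁)
  have hle (t) (ht : t ∈ Ioo 0 t₀) : t ≤ h := ht.2.le.trans ht₀h
  refine ⟨t₀, max C 1, ht₀h, .of_isOpen hDopen
    (zero_notMem_of_tendsto_mul_negDeriv hDopen hφ hb) ht₀ ?_ ?_ hφ hχ ?_ ?_ ?_ ?_⟩
  · exact fun t ht => hD t ht.1 (hle t ht)
  · exact fun t ht => hδ t ht.1 (hle t ht)
  · exact fun t ht => hφim t ht.1 (hle t ht)
  · exact fun t ht => hχpos t ht.1 (hle t ht)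
  · exact fun t ht => (hsub ht).1
  · exact fun t ht => hC t ht.1 (hsub ht).2.2.le

lemma InghamData.eventually_norm_div_sub_one_lt (S : InghamData φ χ δ t₀ C)
    (hball : ∀ t ∈ Ioo 0 t₀, Metric.ball (t : ℂ) (δ t) ⊆ D)
    (hi : Tendsto (fun z => f z / (χ z * Complex.exp (φ z))) (𝓝[D ∩ {z | 0 < z.re}] 0) (𝓝 1))
    {ε : ℝ} (hε : 0 < ε) :
    ∀ᶠ t : ℝ in 𝓝[>] 0, ∀ w : ℂ, ‖w‖ < δ t →
      ‖f (t + w) / (χ (t + w) * Complex.exp (φ (t + w))) - 1‖ < ε := by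
  have hclose := Metric.tendsto_nhds.1 hi ε hε
  rw [eventually_nhdsWithin_iff, Metric.eventually_nhds_iff] at hclose
  obtain ⟨ρ, hρ, hclose⟩ := hclose
  filter_upwards [Ioo_mem_nhdsGT (half_pos hρ), Ioo_mem_nhdsGT S.t₀_pos] with t htρ ht w hw
  have hwt : ‖w‖ < t := hw.trans_le (S.δ_le t ht)
  rw [← dist_eq_norm]
  refine hclose ?_ ⟨hball t ht (by simpa using hw), ?_⟩
  · rw [dist_zero_right]
    calc ‖(t : ℂ) + w‖ ≤ t + ‖w‖ := (norm_add_le _ _).trans_eq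
          (by rw [Complex.norm_of_nonneg ht.1.le])
      _ < ρ := by linarith [htρ.2]
  · have := (abs_le.1 (Complex.abs_re_le_norm w)).1
    simp only [mem_ofPred_eq, Complex.add_re, Complex.ofReal_re]
    linarith

lemma InghamData.exists_eventually_norm_le (S : InghamData φ χ δ t₀ C)
    (hii : ∀ Δ : ℝ, 0 < Δ → ∃ C ρ : ℝ, 0 < C ∧ 0 < ρ ∧ ∀ z : ℂ, 0 < z.re →
      |z.im| ≤ Δ * z.re → ‖z‖ < ρ →
      ‖f z‖ ≤ C * ‖χ ((‖z‖ : ℝ) : ℂ)‖ * Real.exp ((φ ((‖z‖ : ℝ) : ℂ)).re))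
    {K : ℝ} (hK : 0 < K) :
    ∃ B : ℝ, 0 < B ∧ ∀ᶠ t : ℝ in 𝓝[>] 0, ∀ y : ℝ, |y| ≤ K * t →
      ‖f (t + y * Complex.I)‖ ≤ B * amplitude φ χ √(t ^ 2 + y ^ 2) := by
  obtain ⟨B, ρ, hB, hρ, hangle⟩ := hii K hK
  have hsmall : 0 < min ρ t₀ / (1 + K) := div_pos (lt_min hρ S.t₀_pos) (by positivity)
  refine ⟨B, hB, ?_⟩
  filter_upwards [Ioo_mem_nhdsGT hsmall] with t ⟨ht, htsmall⟩ y hy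
  rw [lt_div_iff₀ (by positivity)] at htsmall
  have hnorm : √(t ^ 2 + y ^ 2) < min ρ t₀ := by
    refine (Real.sqrt_le_iff.2 ⟨by positivity, ?_⟩).trans_lt htsmall
    rw [← sq_abs y]
    nlinarith [abs_nonneg y]
  have hmem : √(t ^ 2 + y ^ 2) ∈ Ioo 0 t₀ := ⟨by positivity, hnorm.trans_le (min_le_right _ _)⟩
  have hz := hangle (t + y * Complex.I) (by simpa using ht) (by simpa using hy)
    (by rw [Complex.norm_add_mul_I]; exact hnorm.trans_le (min_le_left _ _))
  rwa [Complex.norm_add_mul_I, S.χ_eq hmem, Complex.norm_of_nonneg (S.χ_re_pos _ hmem).le,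
    mul_assoc] at hz

end Domain

lemma tendsto_nhdsGT_zero_of_negDeriv_eq {D : Set ℂ} (hDopen : IsOpen D) {h : ℝ}
    (hD : ∀ t : ℝ, 0 < t → t ≤ h → (t : ℂ) ∈ D) {φ : ℂ → ℂ} (hφ : DifferentiableOn ℂ φ D)
    {ψ : ℝ → ℝ} (hψ : ∀ᶠ x in atTop, 0 < ψ x ∧ ψ x ≤ h ∧ negDeriv φ (ψ x) = x) :
    Tendsto ψ atTop (𝓝[>] 0) := by
  refine tendsto_nhdsWithin_iff.2 ⟨?_, hψ.mono fun x hx => hx.1⟩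
  refine Metric.tendsto_nhds.2 fun ε hε => ?_
  have hcont : ContinuousOn (fun t : ℝ => deriv φ t) (Icc ε h) :=
    (hφ.deriv hDopen).continuousOn.comp Complex.continuous_ofReal.continuousOn
      fun t ht => hD t (hε.trans_le ht.1) ht.2
  obtain ⟨B, hB⟩ := isCompact_Icc.exists_bound_of_continuousOn hcont
  filter_upwards [hψ, eventually_gt_atTop B] with x ⟨hpos, hle, heq⟩ hx
  rw [Real.dist_eq, sub_zero, abs_of_pos hpos]
  by_contra! hε'
  have : negDeriv φ (ψ x) ≤ B :=
    (neg_le_abs _).trans ((Complex.abs_re_le_norm _).trans (hB (ψ x) ⟨hε', hle⟩))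
  linarith

lemma measureReal_Iio_le_and_le_measureReal_Iic {A : ℝ → ℝ} (hA : Monotone A)
    (hA0 : ∀ x ≤ 0, A x = 0) {x : ℝ} (hx : 0 ≤ x) :
    (hA.stieltjesFunction.measure.restrict (Ici 0)).real (Iio x) ≤ A x ∧
      A x ≤ (hA.stieltjesFunction.measure.restrict (Ici 0)).real (Iic x) := by
  have hright : (hA.stieltjesFunction : ℝ → ℝ) = Function.rightLim A := rfl
  have hleft (y) : Function.leftLim hA.stieltjesFunction y = Function.leftLim A y := by
    rw [hright, leftLim_rightLim (hA.tendsto_leftLim y)]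
  have hleft0 : Function.leftLim A 0 = 0 := by
    refine leftLim_eq_of_tendsto (tendsto_const_nhds.congr' ?_)
    filter_upwards [self_mem_nhdsWithin] with y hy
    exact (hA0 y (le_of_lt hy)).symm
  have hAx : 0 ≤ A x := (hA0 0 le_rfl).ge.trans (hA hx)
  constructor
  · rw [measureReal_restrict_apply measurableSet_Iio, Set.inter_comm, Ici_inter_Iio,
      measureReal_def, StieltjesFunction.measure_Ico, hleft, hleft, hleft0, sub_zero,
      ENNReal.toReal_ofReal']
    exact max_le (hA.leftLim_le le_rfl) hAx
  · rw [measureReal_restrict_apply measurableSet_Iic, Set.inter_comm, Ici_inter_Iic,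
      measureReal_def, StieltjesFunction.measure_Icc, hleft, hleft0, sub_zero, hright,
      ENNReal.toReal_ofReal (hAx.trans (hA.le_rightLim le_rfl))]
    exact hA.le_rightLim le_rfl

theorem ingham_tauberian_general {D : Set ℂ} (hDopen : IsOpen D) {h : ℝ} (hh : 0 < h)
    (hD : ∀ t : ℝ, 0 < t → t ≤ h → (t : ℂ) ∈ D)
    {δ : ℝ → ℝ} (hδ : ∀ t : ℝ, 0 < t → t ≤ h → δ t = Metric.infDist (t : ℂ) Dᶜ)
    {φ χ : ℂ → ℂ} (hφ : DifferentiableOn ℂ φ D) (hχ : DifferentiableOn ℂ χ D)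
    (hφim : ∀ t : ℝ, 0 < t → t ≤ h → (φ t).im = 0)
    (hχpos : ∀ t : ℝ, 0 < t → t ≤ h → (χ t).im = 0 ∧ 0 < (χ t).re)
    (hb : Tendsto (fun t : ℝ => -t * (deriv φ t).re) (𝓝[>] 0) atTop)
    (hc : Tendsto (fun t : ℝ => -δ t * (deriv φ t).re / (t * √(iteratedDeriv 2 φ t).re))
      (𝓝[>] 0) atTop)
    (hd : ∃ C t₀ : ℝ, 0 < t₀ ∧ ∀ t : ℝ, 0 < t → t ≤ t₀ → ∀ w : ℂ, ‖w‖ < δ t →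
      ‖iteratedDeriv 2 φ (t + w)‖ ≤ C * ‖iteratedDeriv 2 φ t‖ ∧ ‖χ (t + w)‖ ≤ C * ‖χ t‖)
    {f : ℂ → ℂ} {μ : Measure ℝ} (hf : IsLaplaceTransform f μ)
    (hi : Tendsto (fun z => f z / (χ z * Complex.exp (φ z))) (𝓝[D ∩ {z | 0 < z.re}] 0) (𝓝 1))
    (hii : ∀ Δ : ℝ, 0 < Δ → ∃ C ρ : ℝ, 0 < C ∧ 0 < ρ ∧ ∀ z : ℂ, 0 < z.re →
      |z.im| ≤ Δ * z.re → ‖z‖ < ρ →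
      ‖f z‖ ≤ C * ‖χ ((‖z‖ : ℝ) : ℂ)‖ * Real.exp ((φ ((‖z‖ : ℝ) : ℂ)).re))
    {a : ℝ → ℝ} (ha : ∀ᶠ x in atTop, μ.real (Iio x) ≤ a x ∧ a x ≤ μ.real (Iic x))
    {ψ : ℝ → ℝ} (hψ : ∀ᶠ x in atTop, 0 < ψ x ∧ ψ x ≤ h ∧ -(deriv φ (ψ x)).re = x) :
    Tendsto (fun x => a x / ((χ (ψ x)).re * Real.exp ((φ (ψ x)).re + x * ψ x) /
      (ψ x * √(2 * Real.pi * (iteratedDeriv 2 φ (ψ x)).re)))) atTop (𝓝 1) := by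
  have hb' : Tendsto (fun t => t * negDeriv φ t) (𝓝[>] 0) atTop :=
    hb.congr fun t => by rw [negDeriv, neg_mul_comm]
  have hc' : Tendsto (fun t => δ t * negDeriv φ t / (t * √(secondDeriv φ t))) (𝓝[>] 0) atTop :=
    hc.congr fun t => by rw [negDeriv, secondDeriv, neg_mul_comm]
  obtain ⟨t₀, C, ht₀, S⟩ := exists_inghamData hDopen hh hD hδ hφ hχ hφim hχpos hb' hc' hd
  have hball (t) (ht : t ∈ Ioo 0 t₀) : Metric.ball (t : ℂ) (δ t) ⊆ D :=
    hδ t ht.1 (ht.2.le.trans ht₀) ▸ ball_infDist_compl_subset _ _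
  have T : InghamTransform f φ χ δ t₀ C :=
    ⟨S, hb', hc', fun _ => S.eventually_norm_div_sub_one_lt hball hi,
      fun _ => S.exists_eventually_norm_le hii⟩
  have hψ0 := tendsto_nhdsGT_zero_of_negDeriv_eq hDopen hD hφ hψ
  refine ((T.tendsto_div_saddlePoint hf ha).comp hψ0).congr' (hψ.mono fun x hx => ?_)
  have hsaddle : negDeriv φ (ψ x) = x := hx.2.2
  simp only [Function.comp_apply, hsaddle, secondDeriv]

/-- Ingham's Tauberian theorem. `A : ℝ → ℝ` is weakly increasing with `A = 0` on `(-∞,0]`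
(representing a weakly increasing function on `[0,∞)` with `A(0) = 0`), and
`f(z) = ∫_0^∞ e^{-zu} dA(u)` is the Lebesgue–Stieltjes integral with respect to `A`. -/
theorem ingham_tauberian
    (D : Set ℂ) (hDopen : IsOpen D) (hDconn : IsConnected D)
    (h : ℝ) (hh : 0 < h) (hD : ∀ t : ℝ, 0 < t → t ≤ h → (t : ℂ) ∈ D)
    -- δ(t) is the distance from t to the complement of D
    (δ : ℝ → ℝ) (hδ : ∀ t : ℝ, 0 < t → t ≤ h → δ t = Metric.infDist (t : ℂ) Dᶜ)
    (φ χ : ℂ → ℂ)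
    -- (a) φ and χ are holomorphic on D, and positive on (0,h]
    (hφdiff : DifferentiableOn ℂ φ D) (hχdiff : DifferentiableOn ℂ χ D)
    (hφpos : ∀ t : ℝ, 0 < t → t ≤ h → (φ (t : ℂ)).im = 0 ∧ 0 < (φ (t : ℂ)).re)
    (hχpos : ∀ t : ℝ, 0 < t → t ≤ h → (χ (t : ℂ)).im = 0 ∧ 0 < (χ (t : ℂ)).re)
    -- (b) -t φ'(t) → ∞ as t → 0⁺
    (hb : Tendsto (fun t : ℝ => -t * (deriv φ (t : ℂ)).re) (𝓝[>] (0:ℝ)) atTop)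
    -- (c) -δ(t) φ'(t) / (t √(φ''(t))) → ∞ as t → 0⁺
    (hc : Tendsto (fun t : ℝ =>
        -δ t * (deriv φ (t : ℂ)).re / (t * Real.sqrt ((iteratedDeriv 2 φ (t : ℂ)).re)))
      (𝓝[>] (0:ℝ)) atTop)
    -- (d) φ''(t+z) = O(φ''(t)) and χ(t+z) = O(χ(t)) uniformly over |z| < δ(t) as t → 0⁺
    (hd : ∃ C t₀ : ℝ, 0 < t₀ ∧ ∀ t : ℝ, 0 < t → t ≤ t₀ → ∀ z : ℂ, ‖z‖ < δ t →
        ‖iteratedDeriv 2 φ ((t : ℂ) + z)‖ ≤ C * ‖iteratedDeriv 2 φ (t : ℂ)‖ ∧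
        ‖χ ((t : ℂ) + z)‖ ≤ C * ‖χ (t : ℂ)‖)
    (A : ℝ → ℝ) (hAmono : Monotone A) (hA0 : ∀ x : ℝ, x ≤ 0 → A x = 0)
    (f : ℂ → ℂ)
    (hfdef : ∀ z : ℂ, 0 < z.re →
        f z = ∫ u in Ici (0:ℝ), Complex.exp (-z * u) ∂hAmono.stieltjesFunction.measure)
    -- f(z) exists for Re(z) > 0
    (hfint : ∀ z : ℂ, 0 < z.re →
        IntegrableOn (fun u : ℝ => Complex.exp (-z * u)) (Ici (0:ℝ))
          hAmono.stieltjesFunction.measure)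
    -- (i) f(z) ~ χ(z) e^{φ(z)} as z → 0 in D
    (hi : Tendsto (fun z : ℂ => f z / (χ z * Complex.exp (φ z))) (𝓝[D \ {0}] 0) (𝓝 1))
    -- (ii) for each Δ > 0, f(z) = O(χ(|z|) e^{φ(|z|)}) as z → 0 with |Im z| ≤ Δ Re z
    (hii : ∀ Δ : ℝ, 0 < Δ → ∃ C ρ : ℝ, 0 < C ∧ 0 < ρ ∧ ∀ z : ℂ, 0 < z.re →
        |z.im| ≤ Δ * z.re → ‖z‖ < ρ →
        ‖f z‖ ≤ C * ‖χ ((‖z‖ : ℝ) : ℂ)‖ * Real.exp ((φ ((‖z‖ : ℝ) : ℂ)).re))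
    -- ψ is the inverse function of -φ'
    (ψ : ℝ → ℝ)
    (hψ : ∀ᶠ x in atTop, 0 < ψ x ∧ ψ x ≤ h ∧ -(deriv φ ((ψ x : ℝ) : ℂ)).re = x) :
    Tendsto (fun x : ℝ => A x /
        ((χ ((ψ x : ℝ) : ℂ)).re * Real.exp ((φ ((ψ x : ℝ) : ℂ)).re + x * ψ x) /
          (ψ x * Real.sqrt (2 * Real.pi * (iteratedDeriv 2 φ ((ψ x : ℝ) : ℂ)).re))))
      atTop (𝓝 1) := by
  exact ingham_tauberian_general hDopen hh hD hδ hφdiff hχdiff (fun t h0 ht => (hφpos t h0 ht).1)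
    hχpos hb hc hd ⟨hfint, hfdef⟩ (hi.mono_left <| nhdsWithin_mono 0
      fun z hz => ⟨hz.1, fun h0 : z = 0 => by simp [h0] at hz⟩) hii
    ((eventually_ge_atTop 0).mono fun _ => measureReal_Iio_le_and_le_measureReal_Iic hAmono hA0) hψ

end
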